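/- arXiv:1911.01993 — 7 statements merged into one kernel-verified Lean document; each statement's English description precedes it below -/
import Mathlib

section
/- (Proposition 1, distribution-free bounds) In the additive-noise ordinal optimisation model, for every n ∈ ℕ, every m ∈ {1,…,n} and every α ∈ (0,1), the success probability satisfies 1 − (1−α)^m ≤ p_success^A(n,m,α) ≤ 1 − (1−α)^n. -/
/-!
The upper bound holds because success forces some `X_i ≤ x_α*`, and by independence no such `i`
exists with probability `(1 - α) ^ n`.

For the lower bound, break ties of `Z` by the index, so that exactly one `m`-element set `S` of
candidates is lowest (`lowestSet S`, `exists_lowestSet`, `disjoint_lowestSet`). Its members are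
all selected (`ncard_lt_of_mem_lowestSet`), so failure implies that every `i ∈ S` has
`X_i > x_α*`. For fixed `S`, the event that `S` is lowest is decreasing in each `X_i` with `i ∈ S`
when all other variables are held fixed, while `X_i > x_α*` is increasing in `X_i`. Since the
variables are independent, Chebyshev's association inequality, applied to one coordinate at a time
(`pi_inter_coord_gt_le`), shows that `S` is lowest with all `X_i > x_α*`, `i ∈ S`, with probability
at most `(1 - α) ^ m` times the probability that `S` is lowest (`pi_lowestSet_inter_le`). Summing
over the disjoint events gives failure probability at most `(1 - α) ^ m`.

The hypothesis on the joint law is phrased with `Measure.pi`, which is the product measure only for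
σ-finite factors; `sigmaFinite_of_pi_ne_top` supplies this.
-/

open MeasureTheory ProbabilityTheory
open scoped ENNReal

/-- If the product measure of `n ≥ 1` copies of `ν` is finite then `ν` is σ-finite: project the
boxes of a countable cover of finite total premeasure to a coordinate where they have finite
measure; the diagonal shows that the projections cover. -/
lemma sigmaFinite_of_pi_ne_top {n : ℕ} (hn : 0 < n) {β : Type*} [MeasurableSpace β]
    (ν : Measure β) (h : Measure.pi (fun _ : Fin n => ν) Set.univ ≠ ⊤) : SigmaFinite ν := by
  have hne : Nonempty (Fin n) := ⟨⟨0, hn⟩⟩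
  rw [Measure.pi_def, toMeasure_apply _ _ MeasurableSet.univ, OuterMeasure.pi,
    OuterMeasure.boundedBy_apply] at h
  have h' := lt_top_iff_ne_top.2 h
  simp only [iInf_lt_iff] at h'
  obtain ⟨t, ht, hsum⟩ := h'
  have key : ∀ k, ∃ i : Fin n, ν (Function.eval i '' t k) < ⊤ := by
    intro k
    rcases (t k).eq_empty_or_nonempty with h0 | h0
    · exact ⟨⟨0, hn⟩, by simp [h0]⟩
    · by_contra! hc
      have h1 := ENNReal.ne_top_of_tsum_ne_top hsum.ne k
      apply h1
      simp only [h0, iSup_pos, piPremeasure]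
      have : ∀ i : Fin n, ν (Function.eval i '' t k) = ⊤ := fun i => top_le_iff.1 (hc i)
      simp [this, hn.ne']
  choose i hi using key
  refine ⟨⟨⟨fun k => Function.eval (i k) '' t k, fun _ => trivial, hi, ?_⟩⟩⟩
  rw [Set.eq_univ_iff_forall]
  intro x
  obtain ⟨k, hk⟩ := Set.mem_iUnion.1 (ht (Set.mem_univ (fun _ => x)))
  exact Set.mem_iUnion.2 ⟨k, _, hk, rfl⟩

/-- Chebyshev's association inequality on the line, for a lower set and an upper half-line. -/
lemma measure_lowerSet_inter_Ioi_le (μ : Measure ℝ) [IsProbabilityMeasure μ] {L : Set ℝ}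
    (hL : IsLowerSet L) (x : ℝ) : μ (L ∩ Set.Ioi x) ≤ μ (Set.Ioi x) * μ L := by
  by_cases hx : x ∈ L
  · have hsub : Set.Iic x ⊆ L := fun y hy => hL hy hx
    have h1 : μ (L ∩ Set.Ioi x) + μ (Set.Iic x) = μ L := by
      rw [← measure_inter_add_sdiff L (measurableSet_Ioi (a := x))]
      congr 2
      ext y
      simp only [Set.mem_Iic, Set.mem_sdiff, Set.mem_Ioi, not_lt]
      exact ⟨fun h => ⟨hsub h, h⟩, fun h => h.2⟩
    have h2 : μ (Set.Ioi x) + μ (Set.Iic x) = 1 := by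
      rw [← Set.compl_Ioi]; exact prob_add_prob_compl measurableSet_Ioi
    have h3 : μ L ≤ 1 := prob_le_one
    refine (ENNReal.add_le_add_iff_right (measure_ne_top μ (Set.Iic x))).1 ?_
    calc μ (L ∩ Set.Ioi x) + μ (Set.Iic x) = (μ (Set.Ioi x) + μ (Set.Iic x)) * μ L := by
          rw [h1, h2, one_mul]
      _ ≤ μ (Set.Ioi x) * μ L + μ (Set.Iic x) := by
          rw [add_mul]; gcongr; exact mul_le_of_le_one_right' h3
  · have : L ∩ Set.Ioi x = ∅ := by
      ext y
      simp only [Set.mem_inter_iff, Set.mem_Ioi, Set.mem_empty_iff_false, iff_false, not_and]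
      exact fun hy hxy => hx (hL hxy.le hy)
    simp [this]

/-- One step of the Harris-type inequality: an event which is decreasing in the first entry of the
`i`-th pair is negatively correlated with that entry being larger than `x`. -/
lemma pi_inter_coord_gt_le {n : ℕ} (μ ρ : Measure ℝ) [IsProbabilityMeasure μ]
    [IsProbabilityMeasure ρ] (x : ℝ) (i : Fin n) {A : Set (Fin n → ℝ × ℝ)} (hA : MeasurableSet A)
    (hdec : ∀ f, ∀ a b y : ℝ, a ≤ b → Function.update f i (b, y) ∈ A →
      Function.update f i (a, y) ∈ A) :
    Measure.pi (fun _ => μ.prod ρ) (A ∩ {f | x < (f i).1}) ≤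
      μ (Set.Ioi x) * Measure.pi (fun _ => μ.prod ρ) A := by
  have hC : MeasurableSet {f : Fin n → ℝ × ℝ | x < (f i).1} :=
    measurableSet_lt measurable_const (by fun_prop)
  have hg : Measurable (A.indicator (1 : (Fin n → ℝ × ℝ) → ℝ≥0∞)) :=
    measurable_one.indicator hA
  have hf : Measurable ((A ∩ {f | x < (f i).1}).indicator (1 : (Fin n → ℝ × ℝ) → ℝ≥0∞)) :=
    measurable_one.indicator (hA.inter hC)
  rw [← lintegral_indicator_one hA, ← lintegral_indicator_one (hA.inter hC),
    ← lintegral_const_mul _ hg]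
  refine lintegral_le_of_lmarginal_le {i} hf (hg.const_mul _) ?_
  intro f
  rw [lmarginal_singleton, lmarginal_singleton]
  have hu : Measurable (fun p : ℝ × ℝ => Function.update f i p) := measurable_update f
  simp only
  have hf' := lintegral_prod_symm (μ := μ) (ν := ρ) _ (hf.comp hu).aemeasurable
  have hg' := lintegral_prod_symm (μ := μ) (ν := ρ) _ ((hg.const_mul (μ (Set.Ioi x))).comp
    hu).aemeasurable
  simp only [Function.comp_apply] at hf' hg'
  rw [hf', hg']
  refine lintegral_mono fun y => ?_
  have hy : Measurable (fun a : ℝ => Function.update f i (a, y)) :=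
    hu.comp (by fun_prop)
  have hL : MeasurableSet {a : ℝ | Function.update f i (a, y) ∈ A} := hy hA
  have key := measure_lowerSet_inter_Ioi_le μ
    (L := {a : ℝ | Function.update f i (a, y) ∈ A}) (fun b a hab hb => hdec f a b y hab hb) x
  rw [← lintegral_indicator_one hL, ← lintegral_indicator_one (hL.inter measurableSet_Ioi),
    ← lintegral_const_mul _ (measurable_one.indicator hL)] at key
  classical
  convert key using 2
  all_goals
    ext a
    simp [Set.indicator_apply]

/-- The event that `S` consists of the candidates with the smallest values of `Z = X + Y`, ties
being broken by the index. A sample is encoded as the function `i ↦ (X_i, Y_i)`. -/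
def lowestSet {n : ℕ} (S : Finset (Fin n)) : Set (Fin n → ℝ × ℝ) :=
  {f | ∀ i ∈ S, ∀ j ∉ S, (f i).1 + (f i).2 < (f j).1 + (f j).2 ∨
    ((f i).1 + (f i).2 = (f j).1 + (f j).2 ∧ i < j)}

lemma measurableSet_lowestSet {n : ℕ} (S : Finset (Fin n)) : MeasurableSet (lowestSet S) := by
  have : lowestSet S = ⋂ i ∈ S, ⋂ j ∈ {j | j ∉ S},
      ({f : Fin n → ℝ × ℝ | (f i).1 + (f i).2 < (f j).1 + (f j).2} ∪
        ({f | (f i).1 + (f i).2 = (f j).1 + (f j).2} ∩ {_f | i < j})) := by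
    ext f; simp [lowestSet]
  rw [this]
  refine Finset.measurableSet_biInter _ fun i _ => ?_
  refine MeasurableSet.biInter (Set.to_countable _) fun j _ => ?_
  exact (measurableSet_lt (by fun_prop) (by fun_prop)).union
    ((measurableSet_eq_fun (by fun_prop) (by fun_prop)).inter (MeasurableSet.const _))

lemma lowestSet_update {n : ℕ} {S : Finset (Fin n)} {i : Fin n} (hi : i ∈ S)
    (f : Fin n → ℝ × ℝ) {a b : ℝ} (y : ℝ) (hab : a ≤ b)
    (h : Function.update f i (b, y) ∈ lowestSet S) :
    Function.update f i (a, y) ∈ lowestSet S := by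
  intro k hk j hj
  have h1 := h k hk j hj
  have hji : j ≠ i := fun e => hj (e ▸ hi)
  rw [Function.update_of_ne hji] at h1 ⊢
  by_cases hki : k = i
  · subst hki
    simp only [Function.update_self] at h1 ⊢
    rcases hab.lt_or_eq with hlt | rfl
    · left
      rcases h1 with h1 | h1 <;> linarith [h1]
    · exact h1
  · rwa [Function.update_of_ne hki] at h1 ⊢

/-- Given that `S` is the lowest set, all members of a subset `T` exceed `x` in their first entry
with probability at most `μ (x, ∞) ^ |T|`. -/
lemma pi_lowestSet_inter_le {n : ℕ} (μ ρ : Measure ℝ) [IsProbabilityMeasure μ]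
    [IsProbabilityMeasure ρ] (x : ℝ) (S : Finset (Fin n)) (T : Finset (Fin n)) (hT : T ⊆ S) :
    Measure.pi (fun _ => μ.prod ρ) (lowestSet S ∩ {f | ∀ i ∈ T, x < (f i).1}) ≤
      μ (Set.Ioi x) ^ T.card * Measure.pi (fun _ => μ.prod ρ) (lowestSet S) := by
  induction T using Finset.induction_on with
  | empty => simp
  | insert i T hi ih =>
    have hiS : i ∈ S := hT (Finset.mem_insert_self i T)
    have hTm : MeasurableSet {f : Fin n → ℝ × ℝ | ∀ j ∈ T, x < (f j).1} := by
      have : {f : Fin n → ℝ × ℝ | ∀ j ∈ T, x < (f j).1} = ⋂ j ∈ T, {f | x < (f j).1} := by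
        ext; simp
      rw [this]
      exact Finset.measurableSet_biInter _ fun j _ =>
        measurableSet_lt measurable_const (by fun_prop)
    have step := pi_inter_coord_gt_le μ ρ x i ((measurableSet_lowestSet S).inter hTm) (by
      rintro f a b y hab ⟨h1, h2⟩
      refine ⟨lowestSet_update hiS f y hab h1, fun j hj => ?_⟩
      have hji : j ≠ i := fun e => hi (e ▸ hj)
      simpa [Function.update_of_ne hji] using h2 j hj)
    have hset : lowestSet S ∩ {f : Fin n → ℝ × ℝ | ∀ j ∈ insert i T, x < (f j).1} =
        (lowestSet S ∩ {f | ∀ j ∈ T, x < (f j).1}) ∩ {f | x < (f i).1} := by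
      ext f
      simp only [Set.mem_inter_iff, Set.mem_ofPred_eq, Finset.forall_mem_insert]
      tauto
    rw [hset, Finset.card_insert_of_notMem hi, pow_succ', mul_assoc]
    exact step.trans (mul_le_mul_right (ih ((Finset.subset_insert i T).trans hT)) _)

lemma exists_lowestSet {n m : ℕ} (hm : m ≤ n) (f : Fin n → ℝ × ℝ) :
    ∃ S : Finset (Fin n), S.card = m ∧ f ∈ lowestSet S := by
  induction m with
  | zero => exact ⟨∅, rfl, by simp [lowestSet]⟩
  | succ m ih =>
    obtain ⟨S, hS, hf⟩ := ih (by omega)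
    have hne : (Sᶜ).Nonempty := by
      rw [← Finset.card_pos, Finset.card_compl, Fintype.card_fin]; omega
    -- adjoin the lexicographically smallest remaining candidate
    obtain ⟨i, hi, hmin⟩ := Finset.exists_min_image Sᶜ
      (fun j => toLex ((f j).1 + (f j).2, j)) hne
    rw [Finset.mem_compl] at hi
    refine ⟨insert i S, by rw [Finset.card_insert_of_notMem hi, hS], ?_⟩
    intro k hk j hj
    rw [Finset.mem_insert, not_or] at hj
    rcases Finset.mem_insert.1 hk with rfl | hk
    · have h := hmin j (Finset.mem_compl.2 hj.2)
      rw [Prod.Lex.toLex_le_toLex] at h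
      exact h.imp id fun h => ⟨h.1, lt_of_le_of_ne h.2 (Ne.symm hj.1)⟩
    · exact hf k hk j hj.2

lemma disjoint_lowestSet {n : ℕ} {S T : Finset (Fin n)} (hc : S.card = T.card) (hne : S ≠ T) :
    Disjoint (lowestSet S) (lowestSet T) := by
  rw [Set.disjoint_left]
  intro f hS hT
  obtain ⟨i, hi, hiT⟩ := Finset.not_subset.1
    fun h : S ⊆ T => hne (Finset.eq_of_subset_of_card_le h hc.ge)
  obtain ⟨j, hj, hjS⟩ := Finset.not_subset.1
    fun h : T ⊆ S => hne (Finset.eq_of_subset_of_card_le h hc.le).symm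
  rcases hS i hi j hjS with h1 | h1 <;> rcases hT j hj i hiT with h2 | h2
  · exact lt_asymm h1 h2
  · exact h1.ne' h2.1
  · exact h2.ne' h1.1
  · exact lt_asymm h1.2 h2.2

/-- Members of a lowest set of size `m` are selected. -/
lemma ncard_lt_of_mem_lowestSet {n : ℕ} {S : Finset (Fin n)} {f : Fin n → ℝ × ℝ}
    (hf : f ∈ lowestSet S) {i : Fin n} (hi : i ∈ S) :
    {j : Fin n | (f j).1 + (f j).2 < (f i).1 + (f i).2}.ncard < S.card := by
  rw [← Set.ncard_coe_finset S]
  refine Set.ncard_lt_ncard (Set.ssubset_iff_of_subset ?_ |>.2 ⟨i, hi, by simp⟩) (Set.toFinite _)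
  intro j hj
  by_contra hjS
  rcases hf i hi j hjS with h | h
  · exact lt_asymm h hj
  · exact h.1.not_gt hj

/-- Proposition 1 (distribution-free bounds) for the additive-noise ordinal
optimisation model: `(X_i, Y_i)`, `i = 1,…,n`, are i.i.d. pairs of independent real
random variables, `X` has density `f_X`, `Y` has density `f_Y`, and `Z_i = X_i + Y_i`.
For `α ∈ (0,1)` let `x_α*` be the `α`-quantile of `X`. A candidate `i` is selected if
`Z_i` is among the `m` smallest of `Z_1, …, Z_n` (i.e. `#{j : Z_j < Z_i} < m`), and
success means some selected `i` has `X_i ≤ x_α*`. Then for every `n`, every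
`m ∈ {1,…,n}` and every `α ∈ (0,1)`,
`1 − (1−α)^m ≤ p_success^A(n, m, α) ≤ 1 − (1−α)^n`. -/
theorem additive_noise_distribution_free_bounds
    {Ω : Type*} [MeasureSpace Ω] [IsProbabilityMeasure (ℙ : Measure Ω)]
    (n m : ℕ) (hm : 1 ≤ m) (hmn : m ≤ n)
    (α : ℝ) (hα : α ∈ Set.Ioo (0 : ℝ) 1)
    (X Y : Fin n → Ω → ℝ)
    (hXmeas : ∀ i, Measurable (X i)) (hYmeas : ∀ i, Measurable (Y i))
    -- the pairs `(X_i, Y_i)` are i.i.d. with common law `ν`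
    (ν : Measure (ℝ × ℝ))
    (hiid : Measure.map (fun ω (i : Fin n) => (X i ω, Y i ω)) ℙ =
      Measure.pi fun _ : Fin n => ν)
    -- within each pair, `X_i` and `Y_i` are independent
    (hindep : ∀ i, IndepFun (X i) (Y i) ℙ)
    -- `X` has density `f_X` and `Y` has density `f_Y` w.r.t. Lebesgue measure
    (fX fY : ℝ → ℝ≥0∞)
    (hfX : ∀ i, Measure.map (X i) ℙ = MeasureTheory.volume.withDensity fX)
    (hfY : ∀ i, Measure.map (Y i) ℙ = MeasureTheory.volume.withDensity fY)
    -- `x_α*` is the `α`-quantile of `X`: `F_X(x_α*) = α`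
    (xα : ℝ) (hxα : ∀ i, (ℙ {ω | X i ω ≤ xα}).toReal = α) :
    1 - (1 - α) ^ m ≤
        (ℙ {ω : Ω | ∃ i : Fin n,
          {j : Fin n | X j ω + Y j ω < X i ω + Y i ω}.ncard < m ∧ X i ω ≤ xα}).toReal ∧
      (ℙ {ω : Ω | ∃ i : Fin n,
          {j : Fin n | X j ω + Y j ω < X i ω + Y i ω}.ncard < m ∧ X i ω ≤ xα}).toReal ≤
        1 - (1 - α) ^ n := by
  have hn : 0 < n := by omega
  let i₀ : Fin n := ⟨0, hn⟩
  have hpair : ∀ i, Measurable fun ω => (X i ω, Y i ω) := fun i => (hXmeas i).prodMk (hYmeas i)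
  have hΦ : Measurable fun ω (i : Fin n) => (X i ω, Y i ω) := measurable_pi_lambda _ hpair
  have hprobpi : IsProbabilityMeasure (Measure.pi fun _ : Fin n => ν) := by
    rw [← hiid]; exact Measure.isProbabilityMeasure_map hΦ.aemeasurable
  -- `Measure.pi` is only a genuine product measure for σ-finite factors
  have hσ : SigmaFinite ν := sigmaFinite_of_pi_ne_top hn ν (measure_ne_top _ _)
  have hν : IsProbabilityMeasure ν := by
    have h := measure_univ (μ := Measure.pi fun _ : Fin n => ν)
    rw [Measure.pi_univ, Finset.prod_const, Finset.card_univ, Fintype.card_fin] at h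
    exact ⟨(ENNReal.pow_right_strictMono hn.ne').injective (by simpa using h)⟩
  have hνi : Measure.map (fun ω => (X i₀ ω, Y i₀ ω)) ℙ = ν := by
    have h := (measurePreserving_eval (fun _ : Fin n => ν) i₀).map_eq
    rw [← hiid, Measure.map_map (measurable_pi_apply i₀) hΦ] at h
    exact h
  rw [(indepFun_iff_map_prod_eq_prod_map_map (hXmeas i₀).aemeasurable
    (hYmeas i₀).aemeasurable).1 (hindep i₀)] at hνi
  set μ := Measure.map (X i₀) ℙ with hμ
  set ρ := Measure.map (Y i₀) ℙ with hρ
  have : IsProbabilityMeasure μ := Measure.isProbabilityMeasure_map (hXmeas i₀).aemeasurable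
  have : IsProbabilityMeasure ρ := Measure.isProbabilityMeasure_map (hYmeas i₀).aemeasurable
  subst hνi
  have hq : (μ (Set.Ioi xα)).toReal = 1 - α := by
    have h : μ.real (Set.Iic xα) = α := by
      rw [measureReal_def, hμ, Measure.map_apply (hXmeas i₀) measurableSet_Iic]
      exact hxα i₀
    rw [← h, ← Set.compl_Iic]
    exact probReal_compl_eq_one_sub measurableSet_Iic
  set succ := {ω : Ω | ∃ i : Fin n,
    {j : Fin n | X j ω + Y j ω < X i ω + Y i ω}.ncard < m ∧ X i ω ≤ xα} with hsucc
  constructor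
  · have hfail : ℙ succᶜ ≤ μ (Set.Ioi xα) ^ m := by
      let P := Measure.pi fun _ : Fin n => μ.prod ρ
      let 𝒮 := Finset.powersetCard m (Finset.univ : Finset (Fin n))
      have hsub : succᶜ ⊆ (fun ω (i : Fin n) => (X i ω, Y i ω)) ⁻¹'
          (⋃ S ∈ 𝒮, (lowestSet S ∩ {f | ∀ i ∈ S, xα < (f i).1})) := by
        intro ω hω
        obtain ⟨S, hS, hf⟩ := exists_lowestSet hmn fun i => (X i ω, Y i ω)
        refine Set.mem_biUnion (x := S) (by simp [𝒮, hS]) ⟨hf, fun i hi => ?_⟩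
        by_contra hle
        exact hω ⟨i, hS ▸ ncard_lt_of_mem_lowestSet hf hi, not_lt.1 hle⟩
      calc ℙ succᶜ ≤ P (⋃ S ∈ 𝒮, (lowestSet S ∩ {f | ∀ i ∈ S, xα < (f i).1})) := by
            refine (measure_mono hsub).trans ?_
            refine (Measure.le_map_apply hΦ.aemeasurable _).trans ?_
            rw [hiid]
        _ ≤ ∑ S ∈ 𝒮, P (lowestSet S ∩ {f | ∀ i ∈ S, xα < (f i).1}) :=
            measure_biUnion_finset_le _ _
        _ ≤ ∑ S ∈ 𝒮, μ (Set.Ioi xα) ^ m * P (lowestSet S) := by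
            refine Finset.sum_le_sum fun S hS => ?_
            have h := pi_lowestSet_inter_le μ ρ xα S S subset_rfl
            rwa [(Finset.mem_powersetCard.1 hS).2] at h
        _ = μ (Set.Ioi xα) ^ m * P (⋃ S ∈ 𝒮, lowestSet S) := by
            rw [← Finset.mul_sum, measure_biUnion_finset _ fun S _ => measurableSet_lowestSet S]
            intro S hS T hT hne
            exact disjoint_lowestSet ((Finset.mem_powersetCard.1 hS).2.trans
              (Finset.mem_powersetCard.1 hT).2.symm) hne
        _ ≤ μ (Set.Ioi xα) ^ m := mul_le_of_le_one_right' prob_le_one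
    have h1 := ENNReal.toReal_mono (by finiteness) hfail
    rw [ENNReal.toReal_pow, hq] at h1
    have h2 : (1 : ℝ) ≤ (ℙ succ).toReal + (ℙ succᶜ).toReal := by
      rw [← ENNReal.toReal_add (measure_ne_top _ _) (measure_ne_top _ _), ← ENNReal.toReal_one]
      refine ENNReal.toReal_mono (by finiteness) ?_
      rw [← measure_univ (μ := (ℙ : Measure Ω))]
      exact measure_univ_le_add_compl succ
    linarith
  · let B : Set (Fin n → ℝ × ℝ) := Set.univ.pi fun _ => Set.Ioi xα ×ˢ Set.univ
    have hB : MeasurableSet B :=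
      MeasurableSet.univ_pi fun _ => measurableSet_Ioi.prod MeasurableSet.univ
    have hPB : ℙ ((fun ω (i : Fin n) => (X i ω, Y i ω)) ⁻¹' B) = μ (Set.Ioi xα) ^ n := by
      rw [← Measure.map_apply hΦ hB, hiid, Measure.pi_pi]
      simp [Measure.prod_prod]
    have hsub : succ ⊆ ((fun ω (i : Fin n) => (X i ω, Y i ω)) ⁻¹' B)ᶜ := by
      rintro ω ⟨i, -, hi⟩ hω
      exact not_lt.2 hi (hω i trivial).1
    calc (ℙ succ).toReal ≤ (ℙ ((fun ω (i : Fin n) => (X i ω, Y i ω)) ⁻¹' B)ᶜ).toReal :=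
          ENNReal.toReal_mono (measure_ne_top _ _) (measure_mono hsub)
      _ = 1 - (1 - α) ^ n := by
          have h := probReal_compl_eq_one_sub (μ := (ℙ : Measure Ω)) (hΦ hB)
          rw [measureReal_def, measureReal_def, hPB, ENNReal.toReal_pow, hq] at h
          exact h
end

section
/- (Theorem 1, connection between Gaussian copula model and additive Gaussian noise) Fix n ∈ ℕ, m ∈ {1,…,n}, α ∈ (0,1) and ρ ∈ (0,1]. Model A (Gaussian copula): let (W_i, V_i), i = 1,…,n, be i.i.d. bivariate Gaussian vectors with standard normal marginals and correlation ρ, and let g, h : ℝ → ℝ be strictly increasing Borel functions; set Z_i = g(W_i) and X_i = h(V_i); the success probability is the probability that some index i with Z_i among the m smallest of Z_1,…,Z_n satisfies X_i ≤ h(Φ⁻¹(α)) (the α-quantile of X). Model B (additive Gaussian noise): let X'_i ~ N(0,1) i.i.d., Y'_i ~ N(0, 1/ρ² − 1) i.i.d. independent of the X'_i, Z'_i = X'_i + Y'_i; the success probability is the probability that some index i with Z'_i among the m smallest of Z'_1,…,Z'_n satisfies X'_i ≤ Φ⁻¹(α). Then the two success probabilities are equal: p_success^G(n,m,α,ρ)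 = p_success^A(n,m,α, ξ² = 1/ρ² − 1). -/
/-!
The event of success depends on the pairs only through the order of the first coordinates and the
comparison of the second coordinates with `q`, so it is unaffected both by the strictly increasing
`g, h` and by multiplying all first coordinates by `ρ > 0`. It is therefore enough that
`(ρ Z', X')` has the law of `(W, V)`. Writing `c = √(1 - ρ²)` and `Y' = √(1/ρ² - 1) U` with `U`
standard normal, `ρ Z' = ρ X' + c U`. The orthogonal map `(x, u) ↦ (ρ x + c u, c x - ρ u)`
preserves the standard Gaussian measure of the plane, and composing it with
`(w, v) ↦ (w, ρ w + c v)` gives `(x, u) ↦ (ρ x + c u, x)`, since `ρ² + c² = 1`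
(`bivGaussPair_eq_map_additiveNoisePair`).
-/

open MeasureTheory ProbabilityTheory Real

/-- The law of a bivariate Gaussian vector with standard normal marginals and
correlation `ρ`, realised as `(W, ρ W + √(1 − ρ²) V)` for independent standard normals
`W, V`. -/
noncomputable def bivGaussPair (ρ : ℝ) : Measure (ℝ × ℝ) :=
  ((gaussianReal 0 1).prod (gaussianReal 0 1)).map
    (fun p => (p.1, ρ * p.1 + Real.sqrt (1 - ρ ^ 2) * p.2))

/-- The law of the pair `(Z', X')` in the additive Gaussian noise model:
`X' ~ N(0,1)`, `Y' ~ N(0, ξ²)` independent of `X'`, and `Z' = X' + Y'`. -/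
noncomputable def additiveNoisePair (ξsq : ℝ) : Measure (ℝ × ℝ) :=
  ((gaussianReal 0 1).prod (gaussianReal 0 ξsq.toNNReal)).map
    (fun p => (p.1 + p.2, p.1))

instance (ξsq : ℝ) : IsProbabilityMeasure (additiveNoisePair ξsq) :=
  Measure.isProbabilityMeasure_map (by fun_prop)

/-- The orthogonal map is the swap of coordinates followed by the rotation of angle `arcsin ρ`. -/
lemma map_reflection_stdGaussian (ρ : ℝ) (h0 : 0 < ρ) (h1 : ρ ≤ 1) :
    ((gaussianReal 0 1).prod (gaussianReal 0 1)).map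
      (fun p : ℝ × ℝ => (ρ * p.1 + √(1 - ρ ^ 2) * p.2, √(1 - ρ ^ 2) * p.1 - ρ * p.2)) =
    (gaussianReal 0 1).prod (gaussianReal 0 1) := by
  have hrot := IsGaussian.map_rotation_eq_self (μ := gaussianReal 0 1)
    (by simp) (Real.arcsin ρ)
  conv_rhs => rw [← hrot, ← Measure.prod_swap,
    Measure.map_map (by fun_prop) measurable_swap]
  congr 1
  funext p
  simp only [Function.comp_apply, ContinuousLinearMap.rotation_apply, Real.cos_arcsin,
    Real.sin_arcsin (by linarith) h1, Prod.fst_swap, Prod.snd_swap, smul_eq_mul, Prod.mk.injEq]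
  constructor <;> ring

lemma bivGaussPair_eq_map_additiveNoisePair (ρ : ℝ) (h0 : 0 < ρ) (h1 : ρ ≤ 1) :
    bivGaussPair ρ = (additiveNoisePair (1 / ρ ^ 2 - 1)).map (fun p => (ρ * p.1, p.2)) := by
  have hc : (0 : ℝ) ≤ 1 - ρ ^ 2 := by nlinarith
  have hξ : (0 : ℝ) ≤ 1 / ρ ^ 2 - 1 := by
    have : 1 / ρ ^ 2 - 1 = (1 - ρ ^ 2) / ρ ^ 2 := by field_simp
    rw [this]
    positivity
  have hY : gaussianReal 0 (1 / ρ ^ 2 - 1).toNNReal =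
      (gaussianReal 0 1).map (√(1 - ρ ^ 2) / ρ * ·) := by
    rw [gaussianReal_map_const_mul]
    congr 1
    · simp
    · ext
      simp only [Real.coe_toNNReal _ hξ, mul_one, NNReal.coe_mk, div_pow, Real.sq_sqrt hc]
      field_simp
  have hprod : (gaussianReal 0 1).prod (gaussianReal 0 (1 / ρ ^ 2 - 1).toNNReal) =
      ((gaussianReal 0 1).prod (gaussianReal 0 1)).map
        (Prod.map id (√(1 - ρ ^ 2) / ρ * ·)) := by
    rw [hY, ← Measure.map_prod_map _ _ measurable_id (by fun_prop), Measure.map_id]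
  rw [bivGaussPair, additiveNoisePair, hprod, Measure.map_map (by fun_prop) (by fun_prop),
    Measure.map_map (by fun_prop) (by fun_prop), ← map_reflection_stdGaussian ρ h0 h1,
    Measure.map_map (by fun_prop) (by fun_prop), map_reflection_stdGaussian ρ h0 h1]
  congr 1
  funext p
  simp only [Function.comp_apply, Prod.map_fst, Prod.map_snd, id_eq, Prod.mk.injEq]
  constructor
  · field_simp
  · linear_combination p.1 * Real.sq_sqrt hc

/-- Theorem 1 (connection between the Gaussian copula model and additive Gaussian
noise): fix `n`, `1 ≤ m ≤ n`, `α ∈ (0,1)` and `ρ ∈ (0,1]`, and let `q = Φ⁻¹(α)`.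
Model A: `(W_i, V_i)`, `i = 1,…,n`, i.i.d. bivariate Gaussian with standard normal
marginals and correlation `ρ`; `g, h` strictly increasing Borel functions;
`Z_i = g(W_i)`, `X_i = h(V_i)`; success means some `i` with `Z_i` among the `m`
smallest of the `Z`'s has `X_i ≤ h(Φ⁻¹(α))`.
Model B: `X'_i ~ N(0,1)` i.i.d., `Y'_i ~ N(0, 1/ρ² − 1)` i.i.d. independent of the
`X'_i`, `Z'_i = X'_i + Y'_i`; success means some `i` with `Z'_i` among the `m`
smallest of the `Z'`'s has `X'_i ≤ Φ⁻¹(α)`.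
Then `p_success^G(n, m, α, ρ) = p_success^A(n, m, α, ξ² = 1/ρ² − 1)`. -/
theorem gaussian_copula_eq_additive_noise (n m : ℕ) (hm : 1 ≤ m) (hmn : m ≤ n)
    (α ρ : ℝ) (hα : α ∈ Set.Ioo (0 : ℝ) 1) (hρ : ρ ∈ Set.Ioc (0 : ℝ) 1)
    (q : ℝ) (hq : ((gaussianReal 0 1) (Set.Iic q)).toReal = α)
    (g h : ℝ → ℝ) (hg : StrictMono g) (hh : StrictMono h)
    (hgm : Measurable g) (hhm : Measurable h) :
    (Measure.pi fun _ : Fin n => bivGaussPair ρ)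
        {v : Fin n → ℝ × ℝ | ∃ i : Fin n,
          {j : Fin n | g (v j).1 < g (v i).1}.ncard < m ∧ h (v i).2 ≤ h q} =
      (Measure.pi fun _ : Fin n => additiveNoisePair (1 / ρ ^ 2 - 1))
        {v : Fin n → ℝ × ℝ | ∃ i : Fin n,
          {j : Fin n | (v j).1 < (v i).1}.ncard < m ∧ (v i).2 ≤ q} := by
  obtain ⟨h0, h1⟩ := hρ
  simp only [hg.lt_iff_lt, hh.le_iff_le]
  -- A measurable equivalence, so that pulling back the event needs no measurability proof.
  let e : ℝ × ℝ ≃ᵐ ℝ × ℝ :=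
    (MeasurableEquiv.mulLeft₀ ρ h0.ne').prodCongr (MeasurableEquiv.refl ℝ)
  have he : bivGaussPair ρ = (additiveNoisePair (1 / ρ ^ 2 - 1)).map e :=
    bivGaussPair_eq_map_additiveNoisePair ρ h0 h1
  have (_ : Fin n) : IsProbabilityMeasure ((additiveNoisePair (1 / ρ ^ 2 - 1)).map e) :=
    Measure.isProbabilityMeasure_map (by fun_prop)
  have hpi : (Measure.pi fun _ : Fin n => bivGaussPair ρ) =
      (Measure.pi fun _ : Fin n => additiveNoisePair (1 / ρ ^ 2 - 1)).map
        (MeasurableEquiv.piCongrRight fun _ : Fin n => e) := by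
    rw [he]
    exact (Measure.pi_map_pi (fun _ => e.measurable.aemeasurable)).symm
  rw [hpi, MeasurableEquiv.map_apply]
  congr 1
  ext v
  change (∃ i : Fin n, {j : Fin n | ρ * (v j).1 < ρ * (v i).1}.ncard < m ∧ (v i).2 ≤ q) ↔ _
  simp only [mul_lt_mul_iff_right₀ h0, Set.mem_ofPred_eq]
end

section
/- (Lemma 2, stochastically dominating Gaussian approximation of the first order statistic) For every θ ∈ (0, π/2) there exists an integer n*(θ) such that for all n ≥ n*(θ) and all z ∈ ℝ, (1 − Φ(z))^n ≤ 1 − Φ((z − μ_n)/σ_n). Equivalently, if Z_{1:n} denotes the minimum of n i.i.d. standard Gaussian random variables and Ẑ_{1:n} ~ N(μ_n, σ_n²), then Z_{1:n} ≼st Ẑ_{1:n} for all n ≥ n*(θ). -/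
/-!
The minimum of `n` standard Gaussians concentrates near `-√(2 log n)`, whereas
`μ_n ≈ -√(log n / c₂)` with `c₂ > 1/2` (because `t < tan t` at `t = π/2 - θ`), so the dominating
normal is centred well to the right of the minimum, and crude Gaussian tail bounds suffice.

Write `m = -μ_n` and `s = σ_n`. Then `n c₁ = exp (c₂ m²)`, `s ≤ B / m` and `1 / s ≤ A m` for
constants `A`, `B` depending on `θ` only, and `m → ∞`. With `K = 2B` there are three ranges of `z`
(`dominance_core`):
* for `z ≤ -(m + K)`, `(z + m) / s ≤ z`, and already `1 - Φ(z)` is below the right-hand side;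
* for `-(m + K) ≤ z ≤ 1`, the left-hand side is at most `exp (-n Φ(-(m + K)))`, where
  `n Φ(-(m + K))` is exponentially large in `m` as `c₂ > 1/2`, while the right-hand side is at
  least the exponential of minus a polynomial in `m`;
* for `z ≥ 1`, the Chernoff bound gives `exp (-n z² / 2)` on the left, against
  `exp (-z² · poly(m))` on the right.
Apart from `m ≥ 1 + 2B`, all that is required of `n` is contained in the single inequality
`eventually_poly_le_exp`.
-/

open MeasureTheory ProbabilityTheory Real

/-- The standard Gaussian CDF `Φ`. -/
noncomputable def stdGaussCDF (x : ℝ) : ℝ := ((gaussianReal 0 1) (Set.Iic x)).toReal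

/-- `c₁ = 1/2 − θ/π`. -/
noncomputable def qc1 (θ : ℝ) : ℝ := 1 / 2 - θ / Real.pi

/-- `c₂ = cot(θ)/(π − 2θ)`. -/
noncomputable def qc2 (θ : ℝ) : ℝ := Real.cot θ / (Real.pi - 2 * θ)

/-- `μ_n = −√(log(n c₁)/c₂)`. -/
noncomputable def muN (θ : ℝ) (n : ℕ) : ℝ := -Real.sqrt (Real.log ((n : ℝ) * qc1 θ) / qc2 θ)

/-- `σ_n² = (−log log 2)/(2 c₂ (log(n c₁) − log log 2))`. -/
noncomputable def sigmaSqN (θ : ℝ) (n : ℕ) : ℝ :=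
  (-Real.log (Real.log 2)) / (2 * qc2 θ * (Real.log ((n : ℝ) * qc1 θ) - Real.log (Real.log 2)))

/-! ### Elementary bounds on the Gaussian distribution -/

/-- A unit interval lying in `[-r, r]` has standard Gaussian mass at least `exp (-r² / 2 - 1)`,
since the density there is at least `exp (-r² / 2) / √(2π)` and `√(2π) ≤ e`. -/
lemma exp_le_gaussian_of_Ioc_subset {a r : ℝ} {S : Set ℝ} (hS : Set.Ioc a (a + 1) ⊆ S)
    (h1 : -r ≤ a) (h2 : a + 1 ≤ r) :
    Real.exp (-r ^ 2 / 2 - 1) ≤ ((gaussianReal 0 1) S).toReal := by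
  have hsqrt : Real.exp (-1) ≤ (√(2 * π * 1))⁻¹ := by
    rw [Real.exp_neg]
    apply inv_anti₀ (by positivity)
    rw [Real.sqrt_le_left (by positivity)]
    nlinarith [Real.exp_one_gt_d9, Real.pi_lt_d2]
  have hpdf : ∀ x ∈ Set.Ioc a (a + 1),
      ENNReal.ofReal (Real.exp (-r ^ 2 / 2 - 1)) ≤ gaussianPDF 0 1 x := by
    intro x hx
    rw [gaussianPDF, gaussianPDFReal]
    apply ENNReal.ofReal_le_ofReal
    have hx2 : x ^ 2 ≤ r ^ 2 := by
      apply sq_le_sq'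
      · linarith [hx.1]
      · linarith [hx.2]
    have he : Real.exp (-r ^ 2 / 2) ≤ Real.exp (-(x - 0) ^ 2 / (2 * 1)) := by
      apply Real.exp_le_exp.2
      ring_nf
      linarith
    calc Real.exp (-r ^ 2 / 2 - 1) = Real.exp (-1) * Real.exp (-r ^ 2 / 2) := by
          rw [← Real.exp_add]; ring_nf
      _ ≤ (√(2 * π * 1))⁻¹ * Real.exp (-(x - 0) ^ 2 / (2 * 1)) := by gcongr
      _ = _ := by simp
  have hle : ENNReal.ofReal (Real.exp (-r ^ 2 / 2 - 1)) ≤ (gaussianReal 0 1) S := by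
    calc ENNReal.ofReal (Real.exp (-r ^ 2 / 2 - 1))
        = ∫⁻ _ in Set.Ioc a (a + 1), ENNReal.ofReal (Real.exp (-r ^ 2 / 2 - 1)) := by
          rw [setLIntegral_const]; simp
      _ ≤ ∫⁻ x in Set.Ioc a (a + 1), gaussianPDF 0 1 x :=
          setLIntegral_mono (measurable_gaussianPDF 0 1) hpdf
      _ = (gaussianReal 0 1) (Set.Ioc a (a + 1)) := (gaussianReal_apply 0 one_ne_zero _).symm
      _ ≤ _ := measure_mono hS
  exact (ENNReal.ofReal_le_iff_le_toReal (measure_ne_top _ _)).1 hle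

lemma one_sub_stdGaussCDF (w : ℝ) :
    1 - stdGaussCDF w = ((gaussianReal 0 1) (Set.Ioi w)).toReal := by
  have := prob_compl_eq_one_sub (μ := gaussianReal 0 1) (measurableSet_Iic (a := w))
  rw [Set.compl_Iic] at this
  rw [this, ENNReal.toReal_sub_of_le prob_le_one ENNReal.one_ne_top]
  simp [stdGaussCDF]

lemma stdGaussCDF_mono : Monotone stdGaussCDF := fun _ _ h =>
  ENNReal.toReal_mono (measure_ne_top _ _) (measure_mono (Set.Iic_subset_Iic.2 h))

lemma stdGaussCDF_nonneg (x : ℝ) : 0 ≤ stdGaussCDF x := ENNReal.toReal_nonneg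

lemma one_sub_stdGaussCDF_nonneg (x : ℝ) : 0 ≤ 1 - stdGaussCDF x := by
  rw [one_sub_stdGaussCDF]; exact ENNReal.toReal_nonneg

lemma exp_le_stdGaussCDF {x z : ℝ} (hx : 0 ≤ x) (hz : -x ≤ z) :
    Real.exp (-(x + 1) ^ 2 / 2 - 1) ≤ stdGaussCDF z := by
  apply exp_le_gaussian_of_Ioc_subset (a := -(x + 1)) _ le_rfl (by linarith)
  intro y hy
  have := hy.2
  simp only [Set.mem_Iic]
  linarith

lemma exp_le_one_sub_stdGaussCDF {v w : ℝ} (hv : 0 ≤ v) (hw : w ≤ v) :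
    Real.exp (-(v + 1) ^ 2 / 2 - 1) ≤ 1 - stdGaussCDF w := by
  rw [one_sub_stdGaussCDF]
  apply exp_le_gaussian_of_Ioc_subset (a := v) _ (by linarith) le_rfl
  intro y hy
  exact lt_of_le_of_lt hw hy.1

/-- The Chernoff bound for the upper Gaussian tail. -/
lemma one_sub_stdGaussCDF_le {z : ℝ} (hz : 0 ≤ z) :
    1 - stdGaussCDF z ≤ Real.exp (-z ^ 2 / 2) := by
  rw [one_sub_stdGaussCDF]
  have h := measure_ge_le_exp_mul_mgf (X := id) (μ := gaussianReal 0 1) z hz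
    (integrable_exp_mul_gaussianReal z)
  rw [mgf_id_gaussianReal, ← Real.exp_add] at h
  refine (ENNReal.toReal_mono (measure_ne_top _ _) (measure_mono ?_)).trans (h.trans_eq ?_)
  · intro y hy
    exact le_of_lt (Set.mem_Ioi.1 hy)
  · congr 1
    simp
    ring

/-! ### Dominance under explicit largeness conditions -/

/-- The dominance inequality for a normal law with mean `-m` and standard deviation `s`. The
hypothesis `big` bounds below `n Φ(-(m + K))`, which serves for moderate `z`, and a fortiori `n`, which serves
for `z > 1`. -/
lemma dominance_core {n : ℕ} {m s A K : ℝ} (hm : 0 ≤ m) (hK : 0 ≤ K) (hA : 0 ≤ A) (hs : 0 < s)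
    (hs1 : s < 1) (hsK : s * (m + K) ≤ K) (hsA : 1 / s ≤ A * m)
    (big : ((m + 1) * (A * m) + 1) ^ 2 + 2 ≤ n * Real.exp (-(m + K + 1) ^ 2 / 2 - 1)) (z : ℝ) :
    (1 - stdGaussCDF z) ^ n ≤ 1 - stdGaussCDF ((z - -m) / s) := by
  set X := (m + 1) * (A * m) with hX
  have hX0 : 0 ≤ X := by positivity
  have hexp1 : Real.exp (-(m + K + 1) ^ 2 / 2 - 1) ≤ 1 := by
    apply Real.exp_le_one_iff.2
    nlinarith [sq_nonneg (m + K + 1)]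
  have hnP : (X + 1) ^ 2 + 2 ≤ n :=
    big.trans (mul_le_of_le_one_right (Nat.cast_nonneg n) hexp1)
  have hn0 : n ≠ 0 := by
    rintro rfl
    norm_num at hnP
    nlinarith
  have hQ0 := one_sub_stdGaussCDF_nonneg z
  rcases le_or_gt z (-(m + K)) with hz | hz
  · have hw : (z - -m) / s ≤ z := by
      rw [div_le_iff₀ hs]
      nlinarith
    calc (1 - stdGaussCDF z) ^ n ≤ 1 - stdGaussCDF z :=
          pow_le_of_le_one hQ0 (by linarith [stdGaussCDF_nonneg z]) hn0
      _ ≤ _ := by linarith [stdGaussCDF_mono hw]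
  · rcases le_or_gt z 1 with hz1 | hz1
    · have hw : (z - -m) / s ≤ X := by
        calc (z - -m) / s ≤ (m + 1) / s := by gcongr; linarith
          _ = (m + 1) * (1 / s) := by ring
          _ ≤ X := by rw [hX]; gcongr
      have hL := exp_le_stdGaussCDF (x := m + K) (by positivity) hz.le
      calc (1 - stdGaussCDF z) ^ n ≤ (Real.exp (-stdGaussCDF z)) ^ n :=
            pow_le_pow_left₀ hQ0 (Real.one_sub_le_exp_neg _) n
        _ = Real.exp (-(n * stdGaussCDF z)) := by rw [← Real.exp_nat_mul]; ring_nf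
        _ ≤ Real.exp (-(X + 1) ^ 2 / 2 - 1) := by
            apply Real.exp_le_exp.2
            have : n * Real.exp (-(m + K + 1) ^ 2 / 2 - 1) ≤ n * stdGaussCDF z := by gcongr
            nlinarith
        _ ≤ _ := exp_le_one_sub_stdGaussCDF hX0 hw
    · have hw : (z - -m) / s ≤ z * X := by
        calc (z - -m) / s ≤ (z * (m + 1)) / s := by gcongr; nlinarith
          _ = z * ((m + 1) * (1 / s)) := by ring
          _ ≤ z * X := by rw [hX]; gcongr
      calc (1 - stdGaussCDF z) ^ n ≤ (Real.exp (-z ^ 2 / 2)) ^ n :=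
            pow_le_pow_left₀ hQ0 (one_sub_stdGaussCDF_le (by linarith)) n
        _ = Real.exp (-(n * z ^ 2 / 2)) := by rw [← Real.exp_nat_mul]; ring_nf
        _ ≤ Real.exp (-(z * X + 1) ^ 2 / 2 - 1) := by
            apply Real.exp_le_exp.2
            have h1 : (z * X + 1) ^ 2 ≤ (z * (X + 1)) ^ 2 :=
              pow_le_pow_left₀ (by positivity) (by nlinarith) 2
            have h2 : z ^ 2 * ((X + 1) ^ 2 + 2) ≤ z ^ 2 * n := by gcongr
            nlinarith
        _ ≤ _ := exp_le_one_sub_stdGaussCDF (by positivity) hw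

/-! ### Asymptotics of the parameters -/

lemma eventually_poly_le_exp {c : ℝ} (hc : 1 / 2 < c) (A K : ℝ) :
    ∀ᶠ m : ℝ in Filter.atTop, ((m + 1) * (A * m) + 1) ^ 2 + 2 ≤
      Real.exp (c * m ^ 2) * Real.exp (-(m + K + 1) ^ 2 / 2 - 1) := by
  have h1 := (Polynomial.tendsto_div_exp_atTop
    (((Polynomial.X + 1) * (Polynomial.C A * Polynomial.X) + 1) ^ 2 + 2)).eventually_le_const
      (show (0 : ℝ) < 1 by norm_num)
  filter_upwards [h1, Filter.eventually_ge_atTop 1,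
    Filter.eventually_ge_atTop ((1 + (K + 1) + (K + 1) ^ 2 / 2 + 1) / (c - 1 / 2))]
    with m hm hm1 hmc
  rw [div_le_one (Real.exp_pos _)] at hm
  simp at hm
  refine hm.trans ?_
  rw [← Real.exp_add]
  apply Real.exp_le_exp.2
  rw [div_le_iff₀ (by linarith)] at hmc
  nlinarith [mul_le_mul_of_nonneg_left hmc (by linarith : (0 : ℝ) ≤ m),
    mul_nonneg (by linarith : (0 : ℝ) ≤ m - 1) (sq_nonneg (K + 1))]

lemma half_lt_qc2 {θ : ℝ} (hθ : θ ∈ Set.Ioo 0 (π / 2)) : 1 / 2 < qc2 θ := by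
  have h := Real.lt_tan (x := π / 2 - θ) (by linarith [hθ.2]) (by linarith [hθ.1])
  rw [Real.tan_pi_div_two_sub, Real.tan_eq_sin_div_cos, inv_div, ← Real.cot_eq_cos_div_sin] at h
  rw [qc2, lt_div_iff₀ (by linarith [hθ.2])]
  linarith

/-- Lemma 2 (stochastically dominating Gaussian approximation of the first order
statistic): for every `θ ∈ (0, π/2)` there is an integer `n*(θ)` such that for all
`n ≥ n*(θ)` (in particular `n c₁ > 1`, so that `μ_n` and `σ_n` are well defined) and
all `z ∈ ℝ`, `(1 − Φ(z))^n ≤ 1 − Φ((z − μ_n)/σ_n)`; that is, the minimum `Z_{1:n}` of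
`n` i.i.d. standard Gaussians is stochastically dominated by `Ẑ_{1:n} ~ N(μ_n, σ_n²)`. -/
theorem stoch_dom_gaussian_approx_first_order_stat (θ : ℝ)
    (hθ : θ ∈ Set.Ioo 0 (Real.pi / 2)) :
    ∃ nstar : ℕ, ∀ n : ℕ, nstar ≤ n →
      1 < (n : ℝ) * qc1 θ ∧
      ∀ z : ℝ,
        (1 - stdGaussCDF z) ^ n ≤
          1 - stdGaussCDF ((z - muN θ n) / Real.sqrt (sigmaSqN θ n)) := by
  have hc2 := half_lt_qc2 hθ
  have hc1 : 0 < qc1 θ := by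
    rw [qc1, sub_pos, div_lt_iff₀ Real.pi_pos]
    linarith [hθ.2]
  have hc1' : qc1 θ ≤ 1 := by
    have : 0 ≤ θ / π := div_nonneg hθ.1.le Real.pi_pos.le
    rw [qc1]; linarith
  have hl : 0 < -Real.log (Real.log 2) := by
    have h1 := Real.log_two_gt_d9
    have h2 := Real.log_two_lt_d9
    have := Real.log_neg (by linarith : 0 < Real.log 2) (by linarith)
    linarith
  set c := qc2 θ with hc
  set l := -Real.log (Real.log 2) with hl_def
  have hc0 : 0 < c := by linarith
  set A := √(2 * c * (c + l) / l) with hA_def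
  set B := √(l / (2 * c ^ 2)) with hB_def
  have hA2 : A ^ 2 = 2 * c * (c + l) / l := Real.sq_sqrt (by positivity)
  have hB2 : B ^ 2 = l / (2 * c ^ 2) := Real.sq_sqrt (by positivity)
  have hA0 : 0 ≤ A := Real.sqrt_nonneg _
  have hB0 : 0 ≤ B := Real.sqrt_nonneg _
  have hnc : Filter.Tendsto (fun n : ℕ => (n : ℝ) * qc1 θ) Filter.atTop Filter.atTop :=
    tendsto_natCast_atTop_atTop.atTop_mul_const hc1
  have hm_tend : Filter.Tendsto (fun n : ℕ => √(Real.log ((n : ℝ) * qc1 θ) / c))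
      Filter.atTop Filter.atTop :=
    Real.tendsto_sqrt_atTop.comp ((Real.tendsto_log_atTop.comp hnc).atTop_div_const hc0)
  have hev := (hnc.eventually_gt_atTop 1).and
    ((hm_tend.eventually (eventually_poly_le_exp hc2 A (2 * B))).and
      (hm_tend.eventually_ge_atTop (1 + 2 * B)))
  obtain ⟨N, hN⟩ := Filter.eventually_atTop.1 hev
  refine ⟨N, fun n hn => ?_⟩
  obtain ⟨h1, hbig, hmB⟩ := hN n hn
  refine ⟨h1, fun z => ?_⟩
  have hL0 : 0 < Real.log ((n : ℝ) * qc1 θ) := Real.log_pos h1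
  have hm2 : √(Real.log ((n : ℝ) * qc1 θ) / c) ^ 2 = Real.log ((n : ℝ) * qc1 θ) / c :=
    Real.sq_sqrt (by positivity)
  have hmu : muN θ n = -√(Real.log ((n : ℝ) * qc1 θ) / c) := rfl
  rw [hmu]
  set m := √(Real.log ((n : ℝ) * qc1 θ) / c) with hm_def
  have hL : Real.log ((n : ℝ) * qc1 θ) = c * m ^ 2 := by rw [hm2]; field_simp
  have hsig : sigmaSqN θ n = l / (2 * c * (c * m ^ 2 + l)) := by
    rw [sigmaSqN, hL, hl_def, ← hc, sub_eq_add_neg]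
  have hm1 : 1 ≤ m := by linarith
  have hsig0 : 0 < sigmaSqN θ n := by rw [hsig]; positivity
  have hs0 : 0 < √(sigmaSqN θ n) := Real.sqrt_pos.2 hsig0
  have hs2 : √(sigmaSqN θ n) ^ 2 = l / (2 * c * (c * m ^ 2 + l)) := by
    rw [Real.sq_sqrt hsig0.le, hsig]
  set s := √(sigmaSqN θ n) with hs_def
  have hsm : s * m ≤ B := by
    refine (sq_le_sq₀ (by positivity) hB0).1 ?_
    rw [mul_pow, hs2, hB2, div_mul_eq_mul_div, div_le_div_iff₀ (by positivity) (by positivity)]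
    have : 0 ≤ 2 * c * l ^ 2 := by positivity
    nlinarith
  -- Otherwise `s m > B`, because `m ≥ 1 + 2B`.
  have hs_half : s ≤ 1 / 2 := by nlinarith
  have hsA : 1 / s ≤ A * m := by
    refine (sq_le_sq₀ (by positivity) (by positivity)).1 ?_
    rw [mul_pow, div_pow, hs2, hA2, one_pow, one_div_div, div_mul_eq_mul_div]
    refine div_le_div_of_nonneg_right ?_ hl.le
    have : 0 ≤ 2 * c * l * (m ^ 2 - 1) := by
      have : 0 ≤ m ^ 2 - 1 := by nlinarith
      positivity
    nlinarith
  have hexp : Real.exp (c * m ^ 2) ≤ n := by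
    rw [← hL, Real.exp_log (by linarith)]
    exact mul_le_of_le_one_right (Nat.cast_nonneg n) hc1'
  refine dominance_core (by linarith) (by positivity : 0 ≤ 2 * B) hA0 hs0 (by linarith)
    ?_ hsA (hbig.trans ?_) z
  · have := mul_le_mul_of_nonneg_right hs_half (by positivity : 0 ≤ 2 * B)
    rw [mul_add]
    linarith
  · exact mul_le_mul_of_nonneg_right hexp (Real.exp_pos _).le
end

section
/- (Theorem 3(a), monotonicity in the sample size) In the Gaussian-copula ordinal optimisation model (reduced form), for any fixed m ∈ ℕ, α ∈ (0,1), ρ ∈ (0,1], and any integers n, n' with m ≤ n ≤ n', the success probability satisfies p_success^G(n, m, α, ρ) ≤ p_success^G(n', m, α, ρ). -/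
/-!
Write each pair as `(Z_i, X_i) = (w_i, ρ w_i + √(1 - ρ²) v_i)` with `w` and `v` independent standard
Gaussian vectors, and add one candidate at a time. Fix `w` with distinct entries. Adding a
candidate removes at most one old candidate `k` from the selection, and only when the new
candidate is selected with a value smaller than `w_k` (`exists_perm_selected`). Exchanging the noises
of `k` and of the new candidate preserves the law of `v`, and since `ρ ≥ 0` it turns a success among
the old candidates into a success among all of them. So, conditionally on almost every `w`,
the success probability does not decrease (`noise_section_le`), and Fubini's theorem concludes.
-/

open MeasureTheory ProbabilityTheory Real

/-- The success event: for a sample `v` of `n` pairs `(Z_i, X_i)`, some candidate `i`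
whose `Z_i` is among the `m` smallest (i.e. `#{j : Z_j < Z_i} < m`) satisfies `X_i ≤ q`. -/
def successEvent (n m : ℕ) (q : ℝ) : Set (Fin n → ℝ × ℝ) :=
  {v | ∃ i : Fin n, {j : Fin n | (v j).1 < (v i).1}.ncard < m ∧ (v i).2 ≤ q}

/-- The success probability `p_success^G(n, m, α, ρ)` of the Gaussian-copula ordinal
optimisation model (reduced form), with `q = Φ⁻¹(α)`: the `(Z_i, X_i)`, `i = 1,…,n`,
are i.i.d. bivariate Gaussian with standard normal marginals and correlation `ρ`. -/
noncomputable def psuccG (n m : ℕ) (ρ q : ℝ) : ℝ :=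
  ((Measure.pi fun _ : Fin n => bivGaussPair ρ) (successEvent n m q)).toReal

/-- The indices of the candidates whose value `w i` is among the `m` smallest. -/
def selected {n : ℕ} (m : ℕ) (w : Fin n → ℝ) : Set (Fin n) :=
  {i | {j : Fin n | w j < w i}.ncard < m}

/-- The success event in terms of the independent vectors `w` (observed values) and `v` (noises)
that generate the sample. -/
def successWV (n m : ℕ) (ρ q : ℝ) : Set ((Fin n → ℝ) × (Fin n → ℝ)) :=
  {p | ∃ i ∈ selected m p.1, ρ * p.1 i + √(1 - ρ ^ 2) * p.2 i ≤ q}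

lemma measurableSet_ncard_lt {Ω : Type*} [MeasurableSpace Ω] {n : ℕ} (m : ℕ) (f : Fin n → Ω → ℝ)
    (hf : ∀ i, Measurable (f i)) (i : Fin n) :
    MeasurableSet {ω | {j : Fin n | f j ω < f i ω}.ncard < m} := by
  classical
  have h : ∀ ω, {j : Fin n | f j ω < f i ω}.ncard = ∑ j, if f j ω < f i ω then 1 else 0 := by
    intro ω
    rw [Set.ncard_eq_toFinset_card', Finset.sum_boole]
    simp
  simp_rw [h]
  refine measurableSet_lt (Finset.measurable_sum _ fun j _ => ?_) measurable_const
  exact Measurable.ite (measurableSet_lt (hf j) (hf i)) measurable_const measurable_const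

lemma measurableSet_successEvent (n m : ℕ) (q : ℝ) : MeasurableSet (successEvent n m q) := by
  have : successEvent n m q = ⋃ i : Fin n,
      {v | {j : Fin n | (v j).1 < (v i).1}.ncard < m} ∩ {v | (v i).2 ≤ q} := by
    ext v; simp [successEvent]
  rw [this]
  refine MeasurableSet.iUnion fun i => MeasurableSet.inter ?_ ?_
  · exact measurableSet_ncard_lt m (fun (j : Fin n) (v : Fin n → ℝ × ℝ) => (v j).1)
      (fun j => (measurable_pi_apply j).fst) i
  · exact measurableSet_le (measurable_pi_apply i).snd measurable_const

lemma measurableSet_successWV (n m : ℕ) (ρ q : ℝ) : MeasurableSet (successWV n m ρ q) := by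
  have : successWV n m ρ q = ⋃ i : Fin n,
      {p | {j : Fin n | p.1 j < p.1 i}.ncard < m} ∩
        {p | ρ * p.1 i + √(1 - ρ ^ 2) * p.2 i ≤ q} := by
    ext v; simp [successWV, selected]
  rw [this]
  refine MeasurableSet.iUnion fun i => MeasurableSet.inter ?_ ?_
  · exact measurableSet_ncard_lt m
      (fun (j : Fin n) (p : (Fin n → ℝ) × (Fin n → ℝ)) => p.1 j)
      (fun j => (measurable_pi_apply j).comp measurable_fst) i
  · exact measurableSet_le ((((measurable_pi_apply i).comp measurable_fst).const_mul _).add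
      (((measurable_pi_apply i).comp measurable_snd).const_mul _)) measurable_const

/-- Reindexing an i.i.d. family along an injection (a subfamily or a permutation) gives an
i.i.d. family with the same marginals. -/
lemma measurePreserving_comp_injective {ι κ : Type*} [Fintype ι] [Fintype κ] (μ : Measure ℝ)
    [IsProbabilityMeasure μ] {f : ι → κ} (hf : Function.Injective f) :
    MeasurePreserving (fun v : κ → ℝ => v ∘ f) (Measure.pi fun _ => μ)
      (Measure.pi fun _ => μ) := by
  refine ⟨by fun_prop, ?_⟩
  have h := (iIndepFun_pi (μ := fun _ : κ => μ) (X := fun _ : κ => (id : ℝ → ℝ))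
    (fun _ => aemeasurable_id)).precomp hf
  simp only [id_eq] at h
  rw [iIndepFun_iff_map_fun_eq_pi_map (fun k => (measurable_pi_apply (f k)).aemeasurable)] at h
  refine Eq.trans h ?_
  congr 1
  funext i
  exact (measurePreserving_eval (fun _ : κ => μ) (f i)).map_eq

lemma ae_injective {n : ℕ} :
    ∀ᵐ w ∂(Measure.pi fun _ : Fin n => gaussianReal 0 1), Function.Injective w := by
  have key : ∀ i j : Fin n, i ≠ j →
      ∀ᵐ w ∂(Measure.pi fun _ : Fin n => gaussianReal 0 1), w i ≠ w j := by
    intro i j hij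
    have h := (iIndepFun_pi (μ := fun _ : Fin n => gaussianReal 0 1)
      (X := fun _ : Fin n => (id : ℝ → ℝ)) (fun _ => aemeasurable_id)).indepFun hij
    simp only [id_eq] at h
    rw [indepFun_iff_map_prod_eq_prod_map_map (measurable_pi_apply i).aemeasurable
      (measurable_pi_apply j).aemeasurable] at h
    have hi := (measurePreserving_eval (fun _ : Fin n => gaussianReal 0 1) i).map_eq
    have hj := (measurePreserving_eval (fun _ : Fin n => gaussianReal 0 1) j).map_eq
    have hD : MeasurableSet {p : ℝ × ℝ | p.1 = p.2} :=
      measurableSet_eq_fun measurable_fst measurable_snd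
    have hnull : ((gaussianReal 0 1).prod (gaussianReal 0 1)) {p : ℝ × ℝ | p.1 = p.2} = 0 := by
      rw [Measure.measure_prod_null hD]
      have := nullSingletonClass_gaussianReal (μ := 0) (v := 1) one_ne_zero
      refine Filter.Eventually.of_forall fun x => ?_
      have hx : Prod.mk x ⁻¹' {p : ℝ × ℝ | p.1 = p.2} = {x} := by
        ext y; simp [eq_comm]
      simp [hx]
    change (Measure.pi fun _ : Fin n => gaussianReal 0 1).map (fun w => (w i, w j)) =
      ((Measure.pi fun _ : Fin n => gaussianReal 0 1).map (Function.eval i)).prod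
        ((Measure.pi fun _ : Fin n => gaussianReal 0 1).map (Function.eval j)) at h
    rw [hi, hj] at h
    rw [← h, Measure.map_apply (by fun_prop) hD] at hnull
    rw [ae_iff]
    simpa using hnull
  have : ∀ᵐ w ∂(Measure.pi fun _ : Fin n => gaussianReal 0 1), ∀ i j, i ≠ j → w i ≠ w j := by
    rw [ae_all_iff]; intro i
    rw [ae_all_iff]; intro j
    by_cases hij : i = j
    · simp [hij]
    · filter_upwards [key i j hij] with w hw _ using hw
  filter_upwards [this] with w hw i j h
  by_contra hij
  exact hw i j hij h

lemma psuccG_eq (n m : ℕ) (ρ q : ℝ) :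
    psuccG n m ρ q = (((Measure.pi fun _ : Fin n => gaussianReal 0 1).prod
      (Measure.pi fun _ : Fin n => gaussianReal 0 1)) (successWV n m ρ q)).toReal := by
  have hmeas : Measurable
      (fun p : ℝ × ℝ => (p.1, ρ * p.1 + Real.sqrt (1 - ρ ^ 2) * p.2)) := by fun_prop
  have hmap : (Measure.pi fun _ : Fin n => bivGaussPair ρ) =
      (Measure.pi fun _ : Fin n => (gaussianReal 0 1).prod (gaussianReal 0 1)).map
        (fun v i => ((v i).1, ρ * (v i).1 + Real.sqrt (1 - ρ ^ 2) * (v i).2)) := by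
    have : IsProbabilityMeasure (((gaussianReal 0 1).prod (gaussianReal 0 1)).map
      (fun p : ℝ × ℝ => (p.1, ρ * p.1 + Real.sqrt (1 - ρ ^ 2) * p.2))) :=
        Measure.isProbabilityMeasure_map hmeas.aemeasurable
    exact (Measure.pi_map_pi (fun _ => hmeas.aemeasurable)).symm
  have hprod := measurePreserving_arrowProdEquivProdArrow ℝ ℝ (Fin n)
    (fun _ => gaussianReal 0 1) (fun _ => gaussianReal 0 1)
  rw [psuccG, hmap, Measure.map_apply (by fun_prop) (measurableSet_successEvent n m q),
    ← hprod.measure_preimage (measurableSet_successWV n m ρ q).nullMeasurableSet]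
  rfl

/-- Adding a last value raises the number of values below `x` by one exactly when that value is
below `x`; with `x` an old value, this is the change of its rank. -/
lemma ncard_lt_succ {n : ℕ} (w : Fin (n + 1) → ℝ) (x : ℝ) :
    {j | w j < x}.ncard =
      {j : Fin n | w j.castSucc < x}.ncard + if w (Fin.last n) < x then 1 else 0 := by
  classical
  rw [Set.ncard_eq_toFinset_card', Set.ncard_eq_toFinset_card']
  simp only [Set.toFinset_ofPred, Finset.card_filter]
  rw [Fin.sum_univ_castSucc]

/-- For distinct values, the old selected candidates can be matched injectively with new selected
ones of no larger value: at most one is dropped, and it is matched with the new candidate. -/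
lemma exists_perm_selected {n : ℕ} (m : ℕ) (w : Fin (n + 1) → ℝ) (hw : Function.Injective w) :
    ∃ σ : Equiv.Perm (Fin (n + 1)), ∀ i ∈ selected m (w ∘ Fin.castSucc),
      σ i.castSucc ∈ selected m w ∧ w (σ i.castSucc) ≤ w i.castSucc := by
  have hdrop : ∀ i ∈ selected m (w ∘ Fin.castSucc), i.castSucc ∉ selected m w →
      w (Fin.last n) < w i.castSucc ∧
        {j : Fin n | w j.castSucc < w i.castSucc}.ncard + 1 = m := by
    intro i hi hi'
    simp only [selected, Set.mem_ofPred_eq, Function.comp_apply] at hi hi'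
    rw [ncard_lt_succ] at hi'
    split_ifs at hi' with h
    · exact ⟨h, by omega⟩
    · omega
  by_cases hk : ∃ k ∈ selected m (w ∘ Fin.castSucc), k.castSucc ∉ selected m w
  · obtain ⟨k, hk, hk'⟩ := hk
    obtain ⟨hlt, hcard⟩ := hdrop k hk hk'
    refine ⟨Equiv.swap k.castSucc (Fin.last n), fun i hi => ?_⟩
    by_cases hik : i = k
    · subst hik
      rw [Equiv.swap_apply_left]
      refine ⟨?_, hlt.le⟩
      change {j | w j < w (Fin.last n)}.ncard < m
      rw [ncard_lt_succ, if_neg (lt_irrefl _)]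
      have : {j : Fin n | w j.castSucc < w (Fin.last n)}.ncard ≤
          {j : Fin n | w j.castSucc < w i.castSucc}.ncard :=
        Set.ncard_le_ncard (fun j (hj : _ < _) => hj.trans hlt) (Set.toFinite _)
      omega
    · rw [Equiv.swap_apply_of_ne_of_ne (fun h => hik (Fin.castSucc_injective n h))
        (Fin.castSucc_ne_last i)]
      refine ⟨?_, le_rfl⟩
      by_contra hi'
      obtain ⟨-, hcard'⟩ := hdrop i hi hi'
      -- Two dropped candidates would have the same rank, hence the same value.
      have hne : w i.castSucc ≠ w k.castSucc :=
        fun h => hik (Fin.castSucc_injective n (hw h))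
      have hstrict : ∀ a b : Fin n, w a.castSucc < w b.castSucc →
          {j : Fin n | w j.castSucc < w a.castSucc}.ncard <
            {j : Fin n | w j.castSucc < w b.castSucc}.ncard := fun a b hab =>
        Set.ncard_lt_ncard ⟨fun j (hj : _ < _) => hj.trans hab,
          fun h => lt_irrefl (w a.castSucc)
            (h (show a ∈ {j : Fin n | w j.castSucc < w b.castSucc} from hab))⟩ (Set.toFinite _)
      rcases lt_or_gt_of_ne hne with h | h
      · have := hstrict _ _ h; omega
      · have := hstrict _ _ h; omega
  · push Not at hk
    exact ⟨1, fun i hi => ⟨hk i hi, le_rfl⟩⟩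

/-- Conditionally on distinct values `w`, an additional candidate does not decrease the success
probability: the old success event is contained in the new one after a permutation of the
noises. -/
lemma noise_section_le {n : ℕ} (m : ℕ) {ρ : ℝ} (hρ : 0 ≤ ρ) (q : ℝ) (w : Fin (n + 1) → ℝ)
    (hw : Function.Injective w) :
    (Measure.pi fun _ : Fin (n + 1) => gaussianReal 0 1)
        {v | (w ∘ Fin.castSucc, v ∘ Fin.castSucc) ∈ successWV n m ρ q} ≤
      (Measure.pi fun _ : Fin (n + 1) => gaussianReal 0 1)
        {v | (w, v) ∈ successWV (n + 1) m ρ q} := by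
  obtain ⟨σ, hσ⟩ := exists_perm_selected m w hw
  have hperm := measurePreserving_comp_injective (gaussianReal 0 1) σ.symm.injective
  have hmeas : MeasurableSet {v | (w, v) ∈ successWV (n + 1) m ρ q} :=
    measurable_prodMk_left (measurableSet_successWV (n + 1) m ρ q)
  rw [← hperm.measure_preimage hmeas.nullMeasurableSet]
  refine measure_mono ?_
  rintro v ⟨i, hi, hle⟩
  obtain ⟨hsel, hval⟩ := hσ i hi
  refine ⟨σ i.castSucc, hsel, ?_⟩
  simp only [Function.comp_apply, Equiv.symm_apply_apply] at hle ⊢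
  exact (add_le_add_left (mul_le_mul_of_nonneg_left hval hρ) _).trans hle

lemma psuccG_le_succ (n m : ℕ) {ρ : ℝ} (hρ : 0 ≤ ρ) (q : ℝ) :
    psuccG n m ρ q ≤ psuccG (n + 1) m ρ q := by
  rw [psuccG_eq, psuccG_eq]
  refine ENNReal.toReal_mono (measure_ne_top _ _) ?_
  have hsub := measurePreserving_comp_injective (gaussianReal 0 1) (Fin.castSucc_injective n)
  have hpair := hsub.prod hsub
  have hold := measurableSet_successWV n m ρ q
  rw [← hpair.measure_preimage hold.nullMeasurableSet,
    Measure.prod_apply (hpair.measurable hold),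
    Measure.prod_apply (measurableSet_successWV (n + 1) m ρ q)]
  refine lintegral_mono_ae ?_
  filter_upwards [ae_injective] with w hw
  exact noise_section_le m hρ q w hw

/-- Theorem 3(a) (monotonicity in the sample size): for fixed `m`, `α ∈ (0,1)`,
`ρ ∈ (0,1]` and integers `m ≤ n ≤ n'`,
`p_success^G(n, m, α, ρ) ≤ p_success^G(n', m, α, ρ)`. -/
theorem psuccG_mono_sample_size (m n n' : ℕ) (hm : 1 ≤ m) (hmn : m ≤ n) (hnn' : n ≤ n')
    (α ρ : ℝ) (hα : α ∈ Set.Ioo (0 : ℝ) 1) (hρ : ρ ∈ Set.Ioc (0 : ℝ) 1)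
    (q : ℝ) (hq : stdGaussCDF q = α) :
    psuccG n m ρ q ≤ psuccG n' m ρ q := by
  induction n', hnn' using Nat.le_induction with
  | base => exact le_rfl
  | succ k _ ih => exact ih.trans (psuccG_le_succ k m hρ.1.le q)
end

section
/- (Theorem 3(b), convergence in the sample size) In the Gaussian-copula ordinal optimisation model (reduced form), for any fixed m ∈ ℕ, α ∈ (0,1) and ρ ∈ (0,1], the success probability converges to one as the sample size grows: lim_{n→∞} p_success^G(n, m, α, ρ) = 1. -/
/-!
Write each pair as `(W, ρ W + √(1 − ρ²) V)` with `W`, `V` independent, so that the vector of all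
`W_i` is independent of the vector of all `V_i`. The candidate with the smallest `W_i` is always
selected. Fix `c ≥ 0` and put `z = (q − c) / ρ`. If that candidate has `W_i ≤ z` and `V_i ≤ c`, then
`X_i ≤ q`, so failure forces either that every `W_i` exceeds `z`, or that the noise `V_i` at the
minimiser exceeds `c`. The first event has probability `P(W > z) ^ n`. Since the minimiser depends
on the vector of the `W_i` only, the noise there is again standard normal, and the second event has probability
at most `P(V > c)` (`prod_noise_argmin_le`). Altogether the failure probability is at most
`P(W > z) ^ n + P(V > c)` (`one_le_success_add`). Choosing `c` large and then `n` large
makes both terms small, because `P(W > z) < 1`.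
-/

open MeasureTheory ProbabilityTheory Real

/-- The samples `w` whose minimum is attained at `i`, ties being broken in favour of the smallest
index, so that these sets partition the sample space for `n ≥ 1`. -/
def firstArgmin (n : ℕ) (i : Fin n) : Set (Fin n → ℝ) :=
  {w | ∀ j, w i < w j ∨ (w i = w j ∧ i ≤ j)}

lemma measurableSet_firstArgmin (n : ℕ) (i : Fin n) : MeasurableSet (firstArgmin n i) := by
  unfold firstArgmin
  rw [Set.ofPred_forall]
  refine MeasurableSet.iInter fun j => ?_
  exact (measurableSet_lt (measurable_pi_apply i) (measurable_pi_apply j)).union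
    ((measurableSet_eq_fun (measurable_pi_apply i) (measurable_pi_apply j)).inter
      (MeasurableSet.const _))

lemma exists_mem_firstArgmin {n : ℕ} (hn : n ≠ 0) (w : Fin n → ℝ) :
    ∃ i, w ∈ firstArgmin n i := by
  have : NeZero n := ⟨hn⟩
  obtain ⟨i, -, hi⟩ := Finset.exists_min_image (Finset.univ : Finset (Fin n))
    (fun i => toLex (w i, i)) Finset.univ_nonempty
  refine ⟨i, fun j => ?_⟩
  have h := hi j (Finset.mem_univ j)
  rw [Prod.Lex.toLex_le_toLex] at h
  exact h

lemma pairwise_disjoint_firstArgmin (n : ℕ) :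
    Pairwise (Function.onFun Disjoint (firstArgmin n)) := by
  intro i j hij
  refine Set.disjoint_left.mpr fun w hi hj => hij ?_
  rcases hi j with h | ⟨h, hle⟩ <;> rcases hj i with k | ⟨k, kle⟩
  · exact absurd h k.not_gt
  · exact absurd k h.ne'
  · exact absurd h k.ne'
  · exact le_antisymm hle kle

/-- The noise at an independently chosen index exceeds `c` no more often than a single noise
variable does. -/
lemma prod_noise_argmin_le (n : ℕ) (γ : Measure ℝ) [IsProbabilityMeasure γ] (c : ℝ) :
    ((Measure.pi fun _ : Fin n => γ).prod (Measure.pi fun _ : Fin n => γ))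
      (⋃ i, firstArgmin n i ×ˢ {v | c < v i}) ≤ γ (Set.Ioi c) := by
  have hV (i : Fin n) : (Measure.pi fun _ : Fin n => γ) {v | c < v i} = γ (Set.Ioi c) :=
    (measurePreserving_eval (fun _ : Fin n => γ) i).measure_preimage
      measurableSet_Ioi.nullMeasurableSet
  calc _ ≤ ∑' i, ((Measure.pi fun _ : Fin n => γ).prod (Measure.pi fun _ : Fin n => γ))
          (firstArgmin n i ×ˢ {v | c < v i}) := measure_iUnion_le _
    _ = (Measure.pi fun _ : Fin n => γ) (⋃ i, firstArgmin n i) * γ (Set.Ioi c) := by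
        simp_rw [Measure.prod_prod, hV]
        rw [ENNReal.tsum_mul_right,
          measure_iUnion (pairwise_disjoint_firstArgmin n) (measurableSet_firstArgmin n)]
    _ ≤ 1 * γ (Set.Ioi c) := by gcongr; exact prob_le_one
    _ = γ (Set.Ioi c) := one_mul _

/-- The map sending the independent vectors `(W, V)` to the sample of pairs `(Z_i, X_i)`. -/
noncomputable def samplePairs (n : ℕ) (ρ : ℝ) (p : (Fin n → ℝ) × (Fin n → ℝ)) : Fin n → ℝ × ℝ :=
  fun i => (p.1 i, ρ * p.1 i + Real.sqrt (1 - ρ ^ 2) * p.2 i)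

lemma map_samplePairs (n : ℕ) (ρ : ℝ) :
    ((Measure.pi fun _ : Fin n => gaussianReal 0 1).prod
      (Measure.pi fun _ : Fin n => gaussianReal 0 1)).map (samplePairs n ρ) =
      Measure.pi fun _ : Fin n => bivGaussPair ρ := by
  have hf : Measurable (fun p : ℝ × ℝ => (p.1, ρ * p.1 + Real.sqrt (1 - ρ ^ 2) * p.2)) := by
    fun_prop
  have : IsProbabilityMeasure (((gaussianReal 0 1).prod (gaussianReal 0 1)).map
      (fun p : ℝ × ℝ => (p.1, ρ * p.1 + Real.sqrt (1 - ρ ^ 2) * p.2))) :=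
    Measure.isProbabilityMeasure_map hf.aemeasurable
  unfold bivGaussPair
  rw [← Measure.pi_map_pi (fun _ => hf.aemeasurable),
    ← (measurePreserving_arrowProdEquivProdArrow ℝ ℝ (Fin n) (fun _ => gaussianReal 0 1)
      (fun _ => gaussianReal 0 1)).map_eq, Measure.map_map _ (MeasurableEquiv.measurable _)]
  · rfl
  · unfold samplePairs; fun_prop

/-- The union bound: either the sample succeeds, or all the `W_i` are large, or the noise at the
minimiser is large. -/
lemma one_le_success_add {n m : ℕ} (hn : n ≠ 0) (hm : 1 ≤ m) {ρ q c : ℝ} (hρ : 0 < ρ)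
    (hc : 0 ≤ c) :
    1 ≤ (Measure.pi fun _ : Fin n => bivGaussPair ρ) (successEvent n m q) +
      (gaussianReal 0 1 (Set.Ioi ((q - c) / ρ)) ^ n + gaussianReal 0 1 (Set.Ioi c)) := by
  set γ := gaussianReal 0 1
  set μ := (Measure.pi fun _ : Fin n => γ).prod (Measure.pi fun _ : Fin n => γ)
  set z := (q - c) / ρ with hz
  have hcover : (Set.univ : Set ((Fin n → ℝ) × (Fin n → ℝ))) ⊆
      samplePairs n ρ ⁻¹' successEvent n m q ∪
        ((Set.univ.pi fun _ => Set.Ioi z) ×ˢ Set.univ ∪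
          ⋃ i, firstArgmin n i ×ˢ {v | c < v i}) := by
    rintro ⟨w, v⟩ -
    obtain ⟨i, hi⟩ := exists_mem_firstArgmin hn w
    have hmin (j) : w i ≤ w j := (hi j).elim le_of_lt fun h => h.1.le
    by_cases hw : z < w i
    · exact Or.inr (Or.inl ⟨fun j _ => hw.trans_le (hmin j), trivial⟩)
    by_cases hv : c < v i
    · exact Or.inr (Or.inr (Set.mem_iUnion.mpr ⟨i, hi, hv⟩))
    refine Or.inl ⟨i, ?_, ?_⟩
    · have : {j : Fin n | (samplePairs n ρ (w, v) j).1 < (samplePairs n ρ (w, v) i).1} = ∅ :=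
        Set.eq_empty_of_forall_notMem fun j hj => (hmin j).not_gt hj
      rw [this, Set.ncard_empty]
      exact hm
    · push Not at hw hv
      have h1 : ρ * w i ≤ q - c := by
        rw [hz, le_div_iff₀ hρ] at hw
        linarith
      have h2 : Real.sqrt (1 - ρ ^ 2) * v i ≤ c :=
        calc Real.sqrt (1 - ρ ^ 2) * v i ≤ Real.sqrt (1 - ρ ^ 2) * c := by gcongr
          _ ≤ 1 * c := by
            gcongr
            exact Real.sqrt_le_one.mpr (by nlinarith)
          _ = c := one_mul c
      change ρ * w i + Real.sqrt (1 - ρ ^ 2) * v i ≤ q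
      linarith
  have hmeas : Measurable (samplePairs n ρ) := by unfold samplePairs; fun_prop
  calc (1 : ENNReal) = μ Set.univ := measure_univ.symm
    _ ≤ _ := (measure_mono hcover).trans (measure_union_le _ _)
    _ ≤ _ := by
      rw [← map_samplePairs]
      refine add_le_add (Measure.le_map_apply hmeas.aemeasurable _)
        ((measure_union_le _ _).trans (add_le_add ?_ (prod_noise_argmin_le n γ c)))
      rw [Measure.prod_prod, Measure.pi_pi]
      simp

lemma gaussian_Ioi_lt_one (z : ℝ) : gaussianReal 0 1 (Set.Ioi z) < 1 := by
  refine lt_of_le_of_ne prob_le_one fun h => ?_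
  have h0 : gaussianReal 0 1 (Set.Iic z) = 0 := by
    rw [← Set.compl_Ioi]
    exact (prob_compl_eq_zero_iff measurableSet_Ioi).mpr h
  have := gaussianReal_absolutelyContinuous' 0 one_ne_zero h0
  simp at this

lemma exists_gaussian_Ioi_lt {ε : ENNReal} (hε : 0 < ε) :
    ∃ c : ℝ, 0 ≤ c ∧ gaussianReal 0 1 (Set.Ioi c) < ε := by
  have h := ENNReal.Tendsto.sub (tendsto_const_nhds (x := (1 : ENNReal)))
    (tendsto_measure_Iic_atTop (gaussianReal 0 1)) (Or.inl ENNReal.one_ne_top)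
  rw [measure_univ, tsub_self] at h
  obtain ⟨c, hc, hc0⟩ := ((h.eventually_lt_const hε).and (Filter.eventually_ge_atTop 0)).exists
  refine ⟨c, hc0, ?_⟩
  rwa [← Set.compl_Iic, prob_compl_eq_one_sub measurableSet_Iic]

/-- Theorem 3(b) (convergence in the sample size): for fixed `m ≥ 1`, `α ∈ (0,1)` and
`ρ ∈ (0,1]`, the success probability converges to one as the sample size grows:
`lim_{n→∞} p_success^G(n, m, α, ρ) = 1`. -/
theorem psuccG_tendsto_one (m : ℕ) (hm : 1 ≤ m)
    (α ρ : ℝ) (hα : α ∈ Set.Ioo (0 : ℝ) 1) (hρ : ρ ∈ Set.Ioc (0 : ℝ) 1)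
    (q : ℝ) (hq : stdGaussCDF q = α) :
    Filter.Tendsto (fun n : ℕ => psuccG n m ρ q) Filter.atTop (nhds 1) := by
  have hprob (n : ℕ) : IsProbabilityMeasure (Measure.pi fun _ : Fin n => bivGaussPair ρ) := by
    rw [← map_samplePairs]
    exact Measure.isProbabilityMeasure_map (by unfold samplePairs; fun_prop)
  unfold psuccG
  rw [← ENNReal.toReal_one]
  refine (ENNReal.tendsto_toReal ENNReal.one_ne_top).comp ?_
  refine tendsto_order.mpr ⟨fun a ha => ?_, fun a ha => .of_forall fun n => prob_le_one.trans_lt ha⟩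
  -- Each of the two error terms gets half of the gap `1 - a`.
  have hε : 0 < (1 - a) / 2 := ENNReal.half_pos (tsub_pos_of_lt ha).ne'
  obtain ⟨c, hc, hcε⟩ := exists_gaussian_Ioi_lt hε
  have hpow := ENNReal.tendsto_pow_atTop_nhds_zero_of_lt_one (gaussian_Ioi_lt_one ((q - c) / ρ))
  filter_upwards [hpow.eventually_lt_const hε, Filter.eventually_ne_atTop 0] with n hn hn0
  by_contra! hle
  have h := one_le_success_add (q := q) hn0 hm hρ.1 hc
  refine h.not_gt ?_
  calc _ < a + ((1 - a) / 2 + (1 - a) / 2) :=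
        ENNReal.add_lt_add_of_le_of_lt (ne_top_of_le_ne_top ENNReal.one_ne_top prob_le_one) hle
          (ENNReal.add_lt_add hn hcε)
    _ = 1 := by rw [ENNReal.add_halves, add_tsub_cancel_of_le ha.le]
end

section
/- (Lemma 8, Gaussian Q-function bounds) For every θ ∈ (0, π/2), setting c₁ = 1/2 − θ/π and c₂ = cot(θ)/(π − 2θ), the Gaussian Q-function Q(x) = 1 − Φ(x) satisfies c₁ · exp(−c₂ x²) ≤ Q(x) ≤ (1/2) · exp(−x²/2) for all x ≥ 0. -/
/-!
The upper bound compares Gaussian tails after a translation: for `x, t ≥ 0`,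
`(t + x)² ≥ t² + x²`, hence `Q(x) ≤ exp(-x²/2) Q(0)` with `Q(0) = 1/2`.

The lower bound is Jensen's inequality applied to a truncation of Craig's formula
`Q(x) = (1/π) ∫₀^{π/2} exp(-x² / (2 sin² t)) dt`, which in the variable `u = cot t` reads
`Q(x) = (1/π) ∫₀^∞ exp(-x² (1 + u²) / 2) / (1 + u²) du`.  Only the inequality `≥` with `u`
restricted to `[0, cot θ]` is needed (`craig_le_tail`): it follows by bounding the density at `y`
below by `(1/π) ∫₀^{cot θ} y exp(-y² (1 + u²) / 2) du` (`mixture_le_pdf`) and exchanging the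
integrals over `u` and over `y ∈ [x, b]`, with `b → ∞`.  The weight `1 / (1 + u²)` has total mass
`arctan (cot θ) = π/2 - θ`, and the mean of `x² (1 + u²) / 2` under the normalized weight is
`x² cot θ / (π - 2θ) = c₂ x²`; Jensen's inequality then gives exactly `c₁ exp(-c₂ x²)`
(`jensen_craig`).
-/

open MeasureTheory ProbabilityTheory Real

lemma one_sub_stdGaussCDF_s12 (x : ℝ) :
    1 - stdGaussCDF x = ∫ y in Set.Ioi x, gaussianPDFReal 0 1 y := by
  have h := probReal_compl_eq_one_sub (μ := gaussianReal 0 1) (measurableSet_Iic (a := x))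
  rw [Set.compl_Iic] at h
  rw [stdGaussCDF, ← measureReal_def, ← h, measureReal_def,
    gaussianReal_apply_eq_integral 0 one_ne_zero, ENNReal.toReal_ofReal]
  exact integral_nonneg fun y => gaussianPDFReal_nonneg 0 1 y

lemma pdf_eq (y : ℝ) : gaussianPDFReal 0 1 y = (√(2 * π))⁻¹ * rexp (-(1 / 2) * y ^ 2) := by
  simp only [gaussianPDFReal, NNReal.coe_one, mul_one, sub_zero]
  congr 2
  ring

lemma integral_pdf_Ioi_zero : ∫ y in Set.Ioi (0 : ℝ), gaussianPDFReal 0 1 y = 1 / 2 := by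
  simp only [pdf_eq]
  rw [integral_const_mul, integral_gaussian_Ioi]
  have : π / (1 / 2) = 2 * π := by ring
  rw [this]
  have : √(2 * π) ≠ 0 := by positivity
  field_simp

lemma tail_le (x : ℝ) (hx : 0 ≤ x) :
    ∫ y in Set.Ioi x, gaussianPDFReal 0 1 y ≤ 1 / 2 * rexp (-(x ^ 2) / 2) := by
  have hshift : ∫ y in Set.Ioi x, gaussianPDFReal 0 1 y
      = ∫ t in Set.Ioi (0 : ℝ), gaussianPDFReal 0 1 (t + x) := by
    have := (measurePreserving_add_right (volume : Measure ℝ) x).setIntegral_preimage_emb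
      (MeasurableEquiv.addRight x).measurableEmbedding (gaussianPDFReal 0 1) (Set.Ioi x)
    rw [← this]
    simp
  rw [hshift, ← integral_pdf_Ioi_zero, ← integral_mul_const]
  have hint := integrable_gaussianPDFReal 0 1
  refine setIntegral_mono_on (hint.comp_add_right x).integrableOn
    (hint.mul_const _).integrableOn measurableSet_Ioi fun t ht => ?_
  have ht : 0 < t := ht
  rw [pdf_eq, pdf_eq, mul_assoc, ← Real.exp_add]
  gcongr
  nlinarith [mul_nonneg ht.le hx]

/-- Dropping the tail `u > c` in `φ(y) = (1/π) ∫₀^∞ y exp(-y² (1 + u²) / 2) du`, where `φ` is the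
standard Gaussian density and `y > 0`; at `y = 0` the left side vanishes. -/
lemma mixture_le_pdf (c y : ℝ) (hc : 0 ≤ c) (hy : 0 ≤ y) :
    π⁻¹ * ∫ u in (0 : ℝ)..c, y * rexp (-(y ^ 2 * (1 + u ^ 2) / 2)) ≤ gaussianPDFReal 0 1 y := by
  rcases hy.eq_or_lt with rfl | hy
  · simpa using gaussianPDFReal_nonneg 0 1 0
  have hsplit : ∀ u : ℝ, y * rexp (-(y ^ 2 * (1 + u ^ 2) / 2))
      = y * rexp (-(1 / 2) * y ^ 2) * rexp (-(y ^ 2 / 2) * u ^ 2) := fun u => by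
    rw [mul_assoc, ← Real.exp_add]
    ring_nf
  have hle : ∫ u in (0 : ℝ)..c, rexp (-(y ^ 2 / 2) * u ^ 2) ≤ √(2 * π) / y / 2 := by
    have h1 : √(2 * π) / y = √(π / (y ^ 2 / 2)) := by
      rw [show π / (y ^ 2 / 2) = 2 * π / y ^ 2 by field_simp, Real.sqrt_div (by positivity),
        Real.sqrt_sq hy.le]
    rw [h1, ← integral_gaussian_Ioi, intervalIntegral.integral_of_le hc]
    refine setIntegral_mono_set (integrable_exp_neg_mul_sq (by positivity)).integrableOn
      (Filter.Eventually.of_forall fun u => (Real.exp_pos _).le)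
      (Set.Ioc_subset_Ioi_self.eventuallyLE)
  simp only [hsplit]
  rw [intervalIntegral.integral_const_mul, pdf_eq]
  have hs0 : 0 < √(2 * π) := by positivity
  calc _ ≤ π⁻¹ * (y * rexp (-(1 / 2) * y ^ 2) * (√(2 * π) / y / 2)) := by gcongr
    _ = (√(2 * π))⁻¹ * rexp (-(1 / 2) * y ^ 2) := by
      field_simp
      exact Real.sq_sqrt (by positivity)

lemma integral_mixture (x b u : ℝ) :
    ∫ y in x..b, y * rexp (-(y ^ 2 * (1 + u ^ 2) / 2))
      = rexp (-(x ^ 2 * (1 + u ^ 2) / 2)) / (1 + u ^ 2)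
        - rexp (-(b ^ 2 * (1 + u ^ 2) / 2)) / (1 + u ^ 2) := by
  have hu : (1 + u ^ 2) ≠ 0 := by positivity
  have hderiv : ∀ y ∈ Set.uIcc x b,
      HasDerivAt (fun y : ℝ => -(rexp (-(y ^ 2 * (1 + u ^ 2) / 2)) / (1 + u ^ 2)))
        (y * rexp (-(y ^ 2 * (1 + u ^ 2) / 2))) y := fun y _ => by
    have := (((((hasDerivAt_pow 2 y).mul_const (1 + u ^ 2)).div_const 2).neg.exp).div_const
      (1 + u ^ 2)).neg
    refine HasDerivAt.congr_deriv this ?_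
    simp only [Pi.neg_apply, Nat.cast_ofNat]
    field_simp
    norm_num
  rw [intervalIntegral.integral_eq_sub_of_hasDerivAt hderiv
    (Continuous.intervalIntegrable (by fun_prop) _ _)]
  ring

lemma continuous_craig (x : ℝ) :
    Continuous fun u : ℝ => rexp (-(x ^ 2 * (1 + u ^ 2) / 2)) / (1 + u ^ 2) :=
  Continuous.div (by fun_prop) (by fun_prop) fun u => by positivity

/-- One half of Craig's formula in the variable `u = cot t`, truncated at `u = c`. -/
lemma craig_le_tail (c x : ℝ) (hc : 0 ≤ c) (hx : 0 ≤ x) :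
    π⁻¹ * ∫ u in (0 : ℝ)..c, rexp (-(x ^ 2 * (1 + u ^ 2) / 2)) / (1 + u ^ 2)
      ≤ ∫ y in Set.Ioi x, gaussianPDFReal 0 1 y := by
  set I : ℝ → ℝ := fun b =>
    ∫ u in (0 : ℝ)..c, rexp (-(b ^ 2 * (1 + u ^ 2) / 2)) / (1 + u ^ 2) with hI
  have hcont : Continuous
      (Function.uncurry fun y u : ℝ => y * rexp (-(y ^ 2 * (1 + u ^ 2) / 2))) := by
    unfold Function.uncurry
    fun_prop
  have hfinite : ∀ b, x ≤ b →
      π⁻¹ * (I x - c * rexp (-(1 / 2) * b ^ 2)) ≤ ∫ y in Set.Ioi x, gaussianPDFReal 0 1 y := by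
    intro b hb
    have hIb : I b ≤ c * rexp (-(1 / 2) * b ^ 2) := by
      have hmono := intervalIntegral.integral_mono_on (μ := volume) hc
        ((continuous_craig b).intervalIntegrable 0 c)
        (continuous_const (y := rexp (-(1 / 2) * b ^ 2)) |>.intervalIntegrable 0 c)
        (fun u _ => by
          refine (div_le_self (Real.exp_pos _).le (by nlinarith [sq_nonneg u])).trans ?_
          gcongr
          nlinarith [mul_nonneg (sq_nonneg b) (sq_nonneg u)])
      simpa using hmono
    have hswap : ∫ y in x..b, ∫ u in (0 : ℝ)..c, y * rexp (-(y ^ 2 * (1 + u ^ 2) / 2))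
        = I x - I b := by
      rw [intervalIntegral_intervalIntegral_swap]
      · simp only [integral_mixture]
        exact intervalIntegral.integral_sub ((continuous_craig x).intervalIntegrable _ _)
          ((continuous_craig b).intervalIntegrable _ _)
      · exact (hcont.continuousOn.integrableOn_compact
          (isCompact_uIcc.prod isCompact_uIcc)).mono_set
          (Set.prod_mono Set.uIoc_subset_uIcc Set.uIoc_subset_uIcc)
    calc π⁻¹ * (I x - c * rexp (-(1 / 2) * b ^ 2)) ≤ π⁻¹ * (I x - I b) := by gcongr
      _ = ∫ y in x..b, π⁻¹ * ∫ u in (0 : ℝ)..c, y * rexp (-(y ^ 2 * (1 + u ^ 2) / 2)) := by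
        rw [intervalIntegral.integral_const_mul, hswap]
      _ ≤ ∫ y in x..b, gaussianPDFReal 0 1 y := by
        refine intervalIntegral.integral_mono_on hb ?_
          (integrable_gaussianPDFReal 0 1).intervalIntegrable
          fun y hy => mixture_le_pdf c y hc (hx.trans hy.1)
        exact (continuous_const.mul (intervalIntegral.continuous_parametric_intervalIntegral_of_continuous'
          hcont 0 c)).intervalIntegrable _ _
      _ ≤ ∫ y in Set.Ioi x, gaussianPDFReal 0 1 y := by
        rw [intervalIntegral.integral_of_le hb]
        exact setIntegral_mono_set (integrable_gaussianPDFReal 0 1).integrableOn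
          (Filter.Eventually.of_forall fun y => gaussianPDFReal_nonneg 0 1 y)
          Set.Ioc_subset_Ioi_self.eventuallyLE
  have hlim : Filter.Tendsto (fun b : ℝ => π⁻¹ * (I x - c * rexp (-(1 / 2) * b ^ 2)))
      Filter.atTop (nhds (π⁻¹ * (I x - c * 0))) := by
    refine ((tendsto_const_nhds.sub (Filter.Tendsto.const_mul c ?_))).const_mul _
    refine Real.tendsto_exp_atBot.comp ?_
    exact (Filter.tendsto_pow_atTop two_ne_zero).const_mul_atTop_of_neg (by norm_num)
  rw [mul_zero, sub_zero] at hlim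
  exact le_of_tendsto hlim (Filter.eventually_atTop.2 ⟨x, hfinite⟩)

/-- Jensen's inequality for `exp` and the weight `1 / (1 + u²)` on `[0, c]`, of mass `arctan c`. -/
lemma jensen_craig (c x : ℝ) (hc : 0 < c) :
    arctan c * rexp (-(x ^ 2 * c / (2 * arctan c)))
      ≤ ∫ u in (0 : ℝ)..c, rexp (-(x ^ 2 * (1 + u ^ 2) / 2)) / (1 + u ^ 2) := by
  have hA : 0 < arctan c := arctan_pos.2 hc
  set m := x ^ 2 * c / (2 * arctan c) with hm
  have hinv : Continuous fun u : ℝ => (1 + u ^ 2)⁻¹ :=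
    Continuous.inv₀ (by fun_prop) fun u => by positivity
  have hlin : ∫ u in (0 : ℝ)..c, rexp (-m) * ((1 + m) * (1 + u ^ 2)⁻¹ - x ^ 2 / 2)
      = arctan c * rexp (-m) := by
    rw [intervalIntegral.integral_const_mul, intervalIntegral.integral_sub
      ((hinv.const_mul _).intervalIntegrable _ _) (continuous_const.intervalIntegrable _ _),
      intervalIntegral.integral_const_mul, integral_inv_one_add_sq, arctan_zero,
      intervalIntegral.integral_const]
    have : m * arctan c = x ^ 2 / 2 * c := by
      rw [hm]
      field_simp
    simp only [smul_eq_mul, sub_zero]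
    linear_combination rexp (-m) * this
  rw [← hlin]
  -- `exp(-a)` dominates its tangent line at `a = m`, the weighted mean of `x² (1 + u²) / 2`.
  refine intervalIntegral.integral_mono_on hc.le
    (Continuous.intervalIntegrable (by fun_prop) _ _)
    ((continuous_craig x).intervalIntegrable _ _) fun u _ => ?_
  have hu : 0 < 1 + u ^ 2 := by positivity
  have htan := Real.add_one_le_exp (m - x ^ 2 * (1 + u ^ 2) / 2)
  have hexp : rexp (-(x ^ 2 * (1 + u ^ 2) / 2))
      = rexp (-m) * rexp (m - x ^ 2 * (1 + u ^ 2) / 2) := by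
    rw [← Real.exp_add]
    ring_nf
  rw [hexp, mul_div_assoc]
  gcongr
  rw [le_div_iff₀ hu]
  have : ((1 + m) * (1 + u ^ 2)⁻¹ - x ^ 2 / 2) * (1 + u ^ 2)
      = m - x ^ 2 * (1 + u ^ 2) / 2 + 1 := by
    field_simp
    ring
  rwa [this]

/-- Lemma 8 (Gaussian Q-function bounds): for every `θ ∈ (0, π/2)` and every `x ≥ 0`,
`c₁ exp(−c₂ x²) ≤ Q(x) ≤ (1/2) exp(−x²/2)`, where `Q(x) = 1 − Φ(x)`. -/
theorem gaussian_Q_function_bounds (θ : ℝ) (hθ : θ ∈ Set.Ioo 0 (Real.pi / 2))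
    (x : ℝ) (hx : 0 ≤ x) :
    qc1 θ * Real.exp (-(qc2 θ) * x ^ 2) ≤ 1 - stdGaussCDF x ∧
      1 - stdGaussCDF x ≤ (1 / 2) * Real.exp (-(x ^ 2) / 2) := by
  rw [one_sub_stdGaussCDF_s12]
  refine ⟨?_, tail_le x hx⟩
  obtain ⟨h0, h1⟩ := hθ
  have hcot : Real.cot θ = tan (π / 2 - θ) := by
    rw [tan_pi_div_two_sub, tan_inv_eq_cot]
  have hpos : 0 < Real.cot θ := by
    rw [hcot]
    exact tan_pos_of_pos_of_lt_pi_div_two (by linarith) (by linarith)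
  have harc : arctan (Real.cot θ) = π / 2 - θ := by
    rw [hcot]
    exact arctan_tan (by linarith) (by linarith)
  refine le_trans ?_ (craig_le_tail (Real.cot θ) x hpos.le hx)
  have hJ := jensen_craig (Real.cot θ) x hpos
  rw [harc] at hJ
  refine le_trans (le_of_eq ?_) (mul_le_mul_of_nonneg_left hJ (inv_nonneg.2 pi_pos.le))
  rw [qc1, qc2, ← mul_assoc]
  congr 1
  · field_simp
  · congr 1
    rw [show 2 * (π / 2 - θ) = π - 2 * θ by ring]
    ring
end

section
/- (Double-exponential upper bound on powers of the Gaussian CDF tail, from the proof of Lemma 2) Fix θ ∈ (0, π/2) and set c₁ = 1/2 − θ/π, c₂ = cot(θ)/(π − 2θ). Then for every n ∈ ℕ and every z ≤ 0, (1 − Φ(z))^n ≤ exp( −n c₁ exp(−c₂ z²) ) = exp( −exp( −( c₂ z² − log(n c₁) ) ) ). -/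
/-!
The tail `Φ(z)`, `z ≤ 0`, is bounded below by integrating the standard Gaussian density of the plane
over part of the half-plane `{u ≥ x}`, `x = -z`. In polar coordinates the ray at angle `ψ` contributes
`exp (-x² / (2 cos² ψ)) / (2π)`; keeping only the angles `|ψ| < α` with `α = π/2 - θ` gives
`Φ(z) ≥ (1/2π) ∫_{-α}^{α} exp (-x² / (2 cos² ψ)) dψ` (`angular_integral_le_tail`). By Jensen's
inequality for the exponential (`angular_integral_ge`), and since `tan' = 1 / cos²`, this is at
least `(α/π) exp (-x² tan α / (2α)) = c₁ exp (-c₂ z²)`. The theorem then follows from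
`1 - t ≤ exp (-t)`.
-/

open MeasureTheory ProbabilityTheory Real

/-- Jensen's inequality for `exp` and the uniform law on `(-α, α)`, under which `1 / cos²` has mean
`tan α / α`. -/
lemma angular_integral_ge {α : ℝ} (h0 : 0 < α) (h1 : α < π / 2) (x : ℝ) :
    2 * α * exp (-(x ^ 2 * tan α / (2 * α))) ≤
      ∫ ψ in (-α)..α, exp (-(x ^ 2 / (2 * cos ψ ^ 2))) := by
  set m := x ^ 2 * tan α / (2 * α) with hm
  have hle : -α ≤ α := by linarith
  have hcos : ∀ ψ ∈ Set.Icc (-α) α, 0 < cos ψ := fun ψ hψ =>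
    cos_pos_of_mem_Ioo ⟨by linarith [hψ.1], by linarith [hψ.2]⟩
  have hcont : ContinuousOn (fun ψ => x ^ 2 / (2 * cos ψ ^ 2)) (Set.Icc (-α) α) := by
    apply ContinuousOn.div (by fun_prop) (by fun_prop)
    intro ψ hψ
    have := hcos ψ hψ
    positivity
  rw [← Set.uIcc_of_le hle] at hcont
  have hint := hcont.intervalIntegrable (μ := volume)
  have hval : ∫ ψ in (-α)..α, x ^ 2 / (2 * cos ψ ^ 2) = x ^ 2 * tan α := by
    rw [intervalIntegral.integral_eq_sub_of_hasDerivAt (f := fun ψ => x ^ 2 / 2 * tan ψ)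
      _ hint]
    · rw [tan_neg]; ring
    · intro ψ hψ
      rw [Set.uIcc_of_le hle] at hψ
      have hc := (hcos ψ hψ).ne'
      refine ((hasDerivAt_tan hc).const_mul (x ^ 2 / 2)).congr_deriv ?_
      field_simp
  -- the tangent line of `exp` at `-m` lies below its graph
  have hmono : ∫ ψ in (-α)..α, exp (-m) * (1 + m - x ^ 2 / (2 * cos ψ ^ 2)) ≤
      ∫ ψ in (-α)..α, exp (-(x ^ 2 / (2 * cos ψ ^ 2))) := by
    apply intervalIntegral.integral_mono_on hle
    · exact (intervalIntegrable_const.sub hint).const_mul _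
    · exact (hcont.neg.rexp).intervalIntegrable
    · intro ψ _
      have h := add_one_le_exp (m - x ^ 2 / (2 * cos ψ ^ 2))
      calc _ ≤ exp (-m) * exp (m - x ^ 2 / (2 * cos ψ ^ 2)) := by gcongr; linarith
        _ = _ := by rw [← exp_add]; congr 1; ring
  refine le_trans (le_of_eq ?_) hmono
  rw [intervalIntegral.integral_const_mul, intervalIntegral.integral_sub
    intervalIntegrable_const hint, hval, intervalIntegral.integral_const, hm]
  simp only [smul_eq_mul]
  field_simp
  ring

/-- The radial integral: the mass of the planar Gaussian density beyond radius `a` along a ray. -/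
lemma lintegral_radial {a : ℝ} (ha : 0 ≤ a) :
    ∫⁻ r in Set.Ioi a, ENNReal.ofReal (r * ((2 * π)⁻¹ * exp (-(r ^ 2 / 2)))) =
      ENNReal.ofReal ((2 * π)⁻¹ * exp (-(a ^ 2 / 2))) := by
  have hd : ∀ r ∈ Set.Ici a, HasDerivAt (fun r : ℝ => -((2 * π)⁻¹ * exp (-(r ^ 2 / 2))))
      (r * ((2 * π)⁻¹ * exp (-(r ^ 2 / 2)))) r := by
    intro r _
    have h := ((((hasDerivAt_pow 2 r).div_const 2).fun_neg.exp).const_mul (2 * π)⁻¹).fun_neg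
    refine h.congr_deriv ?_
    push_cast
    ring
  have hpos : ∀ r ∈ Set.Ioi a, 0 ≤ r * ((2 * π)⁻¹ * exp (-(r ^ 2 / 2))) := by
    intro r hr
    have : 0 ≤ r := ha.trans (le_of_lt hr)
    positivity
  have hlim : Filter.Tendsto (fun r : ℝ => -((2 * π)⁻¹ * exp (-(r ^ 2 / 2)))) Filter.atTop
      (nhds 0) := by
    have h2 : Filter.Tendsto (fun r : ℝ => r ^ 2 / 2) Filter.atTop Filter.atTop :=
      (Filter.tendsto_pow_atTop two_ne_zero).atTop_div_const two_pos
    simpa using ((tendsto_exp_neg_atTop_nhds_zero.comp h2).const_mul (2 * π)⁻¹).neg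
  rw [← ofReal_integral_eq_lintegral_ofReal (integrableOn_Ioi_deriv_of_nonneg' hd hpos hlim)
    ((ae_restrict_iff' measurableSet_Ioi).2 (ae_of_all _ hpos)),
    integral_Ioi_of_hasDerivAt_of_nonneg' hd hpos hlim]
  simp

/-- The planar standard Gaussian density depends only on the radius. -/
lemma gaussianPDF_mul_polar (r ψ : ℝ) :
    gaussianPDF 0 1 (r * cos ψ) * gaussianPDF 0 1 (r * sin ψ) =
      ENNReal.ofReal ((2 * π)⁻¹ * exp (-(r ^ 2 / 2))) := by
  rw [gaussianPDF, gaussianPDF, ← ENNReal.ofReal_mul (gaussianPDFReal_nonneg _ _ _)]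
  congr 1
  simp only [gaussianPDFReal, NNReal.coe_one, mul_one, sub_zero]
  rw [mul_mul_mul_comm, ← exp_add, ← mul_inv, mul_self_sqrt (by positivity)]
  congr 2
  linear_combination (-(r ^ 2) / 2) * sin_sq_add_cos_sq ψ

/-- Craig's polar representation of the Gaussian tail, restricted to the angles `|ψ| < α`. -/
lemma angular_integral_le_tail {α : ℝ} (h0 : 0 < α) (h1 : α < π / 2) {x : ℝ} (hx : 0 ≤ x) :
    ENNReal.ofReal ((2 * π)⁻¹ * ∫ ψ in (-α)..α, exp (-(x ^ 2 / (2 * cos ψ ^ 2)))) ≤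
      gaussianReal 0 1 (Set.Ici x) := by
  have hle : -α ≤ α := by linarith
  have hcos : ∀ ψ ∈ Set.Icc (-α) α, 0 < cos ψ := fun ψ hψ =>
    cos_pos_of_mem_Ioo ⟨by linarith [hψ.1], by linarith [hψ.2]⟩
  set f : ℝ × ℝ → ENNReal := fun p =>
    (Set.Ici x).indicator (gaussianPDF 0 1) p.1 * gaussianPDF 0 1 p.2 with hf
  have hm1 : Measurable ((Set.Ici x).indicator (gaussianPDF 0 1)) :=
    (measurable_gaussianPDF 0 1).indicator measurableSet_Ici
  have hm2 := measurable_gaussianPDF 0 1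
  have hfm : Measurable f := (hm1.comp measurable_fst).mul (hm2.comp measurable_snd)
  have htail : gaussianReal 0 1 (Set.Ici x) = ∫⁻ p, f p := by
    rw [gaussianReal_apply _ one_ne_zero, Measure.volume_eq_prod,
      lintegral_prod_mul hm1.aemeasurable hm2.aemeasurable,
      lintegral_gaussianPDF_eq_one _ one_ne_zero, mul_one, lintegral_indicator measurableSet_Ici]
  have hpolm : Measurable fun p : ℝ × ℝ =>
      ENNReal.ofReal p.1 • f (p.1 * cos p.2, p.1 * sin p.2) := by
    simp only [smul_eq_mul]
    exact (by fun_prop : Measurable fun p : ℝ × ℝ => ENNReal.ofReal p.1).mul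
      (hfm.comp (by fun_prop))
  have hray : ∀ ψ ∈ Set.Ioo (-α) α,
      ENNReal.ofReal ((2 * π)⁻¹ * exp (-(x ^ 2 / (2 * cos ψ ^ 2)))) ≤
        ∫⁻ r in Set.Ioi (0 : ℝ), ENNReal.ofReal r • f (r * cos ψ, r * sin ψ) := by
    intro ψ hψ
    have hc := hcos ψ (Set.Ioo_subset_Icc_self hψ)
    have ha : 0 ≤ x / cos ψ := by positivity
    have he : x ^ 2 / (2 * cos ψ ^ 2) = (x / cos ψ) ^ 2 / 2 := by field_simp
    rw [he, ← lintegral_radial ha]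
    refine le_trans (le_of_eq ?_) (lintegral_mono_set (Set.Ioi_subset_Ioi ha))
    refine setLIntegral_congr_fun measurableSet_Ioi fun r hr => ?_
    have hmem : r * cos ψ ∈ Set.Ici x := ((div_lt_iff₀ hc).1 hr).le
    simp only [hf, smul_eq_mul]
    rw [Set.indicator_of_mem hmem, gaussianPDF_mul_polar,
      ENNReal.ofReal_mul (ha.trans (le_of_lt hr))]
  have hcont : ContinuousOn (fun ψ => (2 * π)⁻¹ * exp (-(x ^ 2 / (2 * cos ψ ^ 2))))
      (Set.Icc (-α) α) := by
    refine continuousOn_const.mul (ContinuousOn.rexp (ContinuousOn.neg ?_))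
    apply ContinuousOn.div (by fun_prop) (by fun_prop)
    intro ψ hψ
    have := hcos ψ hψ
    positivity
  rw [htail, ← lintegral_comp_polarCoord_symm, ← intervalIntegral.integral_const_mul,
    intervalIntegral.integral_of_le hle, integral_Ioc_eq_integral_Ioo,
    ofReal_integral_eq_lintegral_ofReal
      (hcont.integrableOn_Icc.mono_set Set.Ioo_subset_Icc_self)
      (ae_of_all _ fun ψ => by positivity)]
  simp only [polarCoord_target, polarCoord_symm_apply]
  rw [Measure.volume_eq_prod, setLIntegral_prod_symm _ hpolm.aemeasurable]
  refine (setLIntegral_mono' measurableSet_Ioo hray).trans (lintegral_mono_set ?_)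
  exact Set.Ioo_subset_Ioo (by linarith [pi_pos]) (by linarith [pi_pos])

/-- The lower bound on the lower tail that drives the theorem: the angular estimates at
`α = π/2 - θ`, where `tan α = cot θ`. -/
lemma stdGaussCDF_ge {θ : ℝ} (hθ : θ ∈ Set.Ioo 0 (π / 2)) {z : ℝ} (hz : z ≤ 0) :
    qc1 θ * exp (-(qc2 θ) * z ^ 2) ≤ stdGaussCDF z := by
  have hsymm : gaussianReal 0 1 (Set.Iic z) = gaussianReal 0 1 (Set.Ici (-z)) := by
    have h := gaussianReal_map_neg (μ := 0) (v := 1)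
    rw [neg_zero] at h
    conv_rhs => rw [← h]
    rw [Measure.map_apply measurable_neg measurableSet_Ici]
    congr 1
    ext y
    simp
  have h0 : 0 < π / 2 - θ := by linarith [hθ.2]
  have h1 : π / 2 - θ < π / 2 := by linarith [hθ.1]
  have hA := angular_integral_ge h0 h1 (-z)
  have hT := angular_integral_le_tail h0 h1 (neg_nonneg.2 hz)
  rw [← hsymm] at hT
  refine le_trans ?_ ((ENNReal.ofReal_le_iff_le_toReal (measure_ne_top _ _)).1 hT)
  refine le_trans (le_of_eq ?_) (mul_le_mul_of_nonneg_left hA (by positivity))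
  rw [← mul_assoc]
  congr 1
  · rw [qc1]; field_simp
  · congr 1
    rw [qc2, tan_pi_div_two_sub, tan_eq_sin_div_cos, inv_div, ← cot_eq_cos_div_sin]
    have : π - 2 * θ ≠ 0 := by linarith
    have e : 2 * (π / 2 - θ) = π - 2 * θ := by ring
    rw [e]
    ring

/-- Double-exponential upper bound on powers of the Gaussian CDF tail (from the
proof of Lemma 2): for `θ ∈ (0, π/2)`, every sample size `n ≥ 1` and every `z ≤ 0`,
`(1 − Φ(z))^n ≤ exp(−n c₁ exp(−c₂ z²)) = exp(−exp(−(c₂ z² − log(n c₁))))`. -/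
theorem pow_gaussian_tail_double_exp_bound (θ : ℝ) (hθ : θ ∈ Set.Ioo 0 (Real.pi / 2))
    (n : ℕ) (hn : 1 ≤ n) (z : ℝ) (hz : z ≤ 0) :
    (1 - stdGaussCDF z) ^ n ≤
        Real.exp (-((n : ℝ) * qc1 θ * Real.exp (-(qc2 θ) * z ^ 2))) ∧
      Real.exp (-((n : ℝ) * qc1 θ * Real.exp (-(qc2 θ) * z ^ 2))) =
        Real.exp (-Real.exp (-(qc2 θ * z ^ 2 - Real.log ((n : ℝ) * qc1 θ)))) := by
  have hc : 0 < qc1 θ := by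
    have h : θ / π < 1 / 2 := by
      rw [div_lt_iff₀ pi_pos]
      linarith [hθ.2]
    rw [qc1]
    linarith
  have hnc : 0 < (n : ℝ) * qc1 θ := mul_pos (by exact_mod_cast hn) hc
  constructor
  · have hle1 : stdGaussCDF z ≤ 1 := by
      simpa [stdGaussCDF, measureReal_def] using
        measureReal_le_one (μ := gaussianReal 0 1) (s := Set.Iic z)
    calc (1 - stdGaussCDF z) ^ n
        ≤ exp (-(qc1 θ * exp (-(qc2 θ) * z ^ 2))) ^ n := by
          refine pow_le_pow_left₀ (by linarith) ?_ n
          exact (one_sub_le_exp_neg _).trans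
            (exp_le_exp.2 (neg_le_neg (stdGaussCDF_ge hθ hz)))
      _ = _ := by
          rw [← exp_nat_mul]
          congr 1
          ring
  · congr 2
    rw [neg_sub, sub_eq_add_neg, exp_add, exp_log hnc, neg_mul]
end
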